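/- There exists a constant C > 0 such that for every ◊-squared Horton set H_◊ with parameters m and k, every point s of the plane stabs at most C·m·k³ empty triangles of H_◊. -/

import Mathlib

open scoped Classical

noncomputable section

/-- Euclidean distance between two points of the plane `ℝ × ℝ`. -/
def elen (p q : ℝ × ℝ) : ℝ := Real.sqrt ((p.1 - q.1) ^ 2 + (p.2 - q.2) ^ 2)

/-- Orientation determinant of an ordered triple of points. -/
def orient (a b c : ℝ × ℝ) : ℝ :=
  (b.1 - a.1) * (c.2 - a.2) - (b.2 - a.2) * (c.1 - a.1)

/-- A planar point set is in general position if no three distinct points are collinear. -/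
def GeneralPosition (S : Set (ℝ × ℝ)) : Prop :=
  ∀ a ∈ S, ∀ b ∈ S, ∀ c ∈ S, a ≠ b → a ≠ c → b ≠ c →
    ¬ Collinear ℝ ({a, b, c} : Set (ℝ × ℝ))

/-- No two points of `S` share an `x`-coordinate. -/
def DistinctX (S : Set (ℝ × ℝ)) : Prop :=
  ∀ a ∈ S, ∀ b ∈ S, a ≠ b → a.1 ≠ b.1

/-- `p` lies strictly below the (non-vertical) line through `a` and `b`, where `a.1 < b.1`. -/
def StrictlyBelow (p a b : ℝ × ℝ) : Prop :=
  (b.1 - a.1) * (p.2 - a.2) < (b.2 - a.2) * (p.1 - a.1)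

/-- `p` lies strictly above the (non-vertical) line through `a` and `b`, where `a.1 < b.1`. -/
def StrictlyAbove (p a b : ℝ × ℝ) : Prop :=
  (b.2 - a.2) * (p.1 - a.1) < (b.1 - a.1) * (p.2 - a.2)

/-- `Y` is high above `X`: every line through two points of `Y` is above every point of `X`. -/
def HighAbove (Y X : Set (ℝ × ℝ)) : Prop :=
  ∀ a ∈ Y, ∀ b ∈ Y, a.1 < b.1 → ∀ p ∈ X, StrictlyBelow p a b

/-- `X` is deep below `Y`: every line through two points of `X` is below every point of `Y`. -/
def DeepBelow (X Y : Set (ℝ × ℝ)) : Prop :=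
  ∀ a ∈ X, ∀ b ∈ X, a.1 < b.1 → ∀ p ∈ Y, StrictlyAbove p a b

/-- The even-indexed points of `H` in increasing order of `x`-coordinate (`H₀`). -/
def evenPart (H : Finset (ℝ × ℝ)) : Finset (ℝ × ℝ) :=
  H.filter fun p => Even (H.filter fun q => q.1 < p.1).card

/-- The odd-indexed points of `H` in increasing order of `x`-coordinate (`H₁`). -/
def oddPart (H : Finset (ℝ × ℝ)) : Finset (ℝ × ℝ) :=
  H.filter fun p => ¬ Even (H.filter fun q => q.1 < p.1).card

/-- Horton sets. -/
inductive IsHorton : Finset (ℝ × ℝ) → Prop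
  | small (H : Finset (ℝ × ℝ)) (hgp : GeneralPosition ↑H) (hx : DistinctX ↑H)
      (hcard : H.card ≤ 2) : IsHorton H
  | split (H : Finset (ℝ × ℝ)) (hgp : GeneralPosition ↑H) (hx : DistinctX ↑H)
      (hcard : 2 < H.card) (h0 : IsHorton (evenPart H)) (h1 : IsHorton (oddPart H))
      (hhigh : HighAbove ↑(oddPart H) ↑(evenPart H))
      (hdeep : DeepBelow ↑(evenPart H) ↑(oddPart H)) : IsHorton H

/-- `t` is an empty triangle of the point set `S`: a three-element non-collinear subset of `S`
whose open interior contains no point of `S`. -/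
def IsEmptyTriangleOf (S : Set (ℝ × ℝ)) (t : Finset (ℝ × ℝ)) : Prop :=
  t.card = 3 ∧ (↑t : Set (ℝ × ℝ)) ⊆ S ∧ ¬ Collinear ℝ (↑t : Set (ℝ × ℝ)) ∧
    ∀ p ∈ S, p ∉ interior (convexHull ℝ (↑t : Set (ℝ × ℝ)))

/-- `τ S`: the number of empty triangles of `S`. -/
def tau (S : Set (ℝ × ℝ)) : ℕ :=
  {t : Finset (ℝ × ℝ) | IsEmptyTriangleOf S t}.ncard

/-- The number of empty triangles of `S` stabbed by the point `q`. -/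
def stabbedCount (S : Set (ℝ × ℝ)) (q : ℝ × ℝ) : ℕ :=
  {t : Finset (ℝ × ℝ) | IsEmptyTriangleOf S t ∧
    q ∈ interior (convexHull ℝ (↑t : Set (ℝ × ℝ)))}.ncard

/-- The number of empty triangles of `S` having `q` as a vertex. -/
def incidentCount (S : Set (ℝ × ℝ)) (q : ℝ × ℝ) : ℕ :=
  {t : Finset (ℝ × ℝ) | IsEmptyTriangleOf S t ∧ q ∈ t}.ncard

/-- The `m × m` integer grid `{1,…,m} × {1,…,m}`, viewed inside `ℝ × ℝ`. -/
def grid (m : ℕ) : Finset (ℝ × ℝ) :=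
  (Finset.Icc 1 m ×ˢ Finset.Icc 1 m).image fun p => ((p.1 : ℝ), (p.2 : ℝ))

/-- The points of the grid on the line spanned by `a` and `b`. -/
def gridLine (m : ℕ) (a b : ℝ × ℝ) : Finset (ℝ × ℝ) :=
  (grid m).filter fun x => Collinear ℝ ({a, b, x} : Set (ℝ × ℝ))

/-- Rotation of the plane by (minus) 90 degrees. -/
def rotCW (p : ℝ × ℝ) : ℝ × ℝ := (p.2, -p.1)

/-- `f` is an `ε`-perturbation of the grid `{1,…,m} × {1,…,m}` turning it into a
squared Horton set (of `m ^ 2` points). -/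
structure IsSquaredHorton (m : ℕ) (ε : ℝ) (f : ℝ × ℝ → ℝ × ℝ) : Prop where
  eps_pos : 0 < ε
  eps_lt : ε < 1 / 4
  inj : Set.InjOn f ↑(grid m)
  close : ∀ p ∈ grid m, elen (f p) p ≤ ε
  orient_iff : ∀ a ∈ grid m, ∀ b ∈ grid m, ∀ c ∈ grid m,
    orient a b c ≠ 0 → (0 < orient a b c ↔ 0 < orient (f a) (f b) (f c))
  nonvertical : ∀ a ∈ grid m, ∀ b ∈ grid m, a ≠ b → a.1 ≠ b.1 →
    IsHorton ((gridLine m a b).image f)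
  vertical : ∀ a ∈ grid m, ∀ b ∈ grid m, a ≠ b → a.1 = b.1 →
    IsHorton (((gridLine m a b).image f).image rotCW)

/-- A finite point set is in convex position. -/
def ConvexPos (S : Finset (ℝ × ℝ)) : Prop :=
  ∀ x ∈ S, x ∉ convexHull ℝ ((↑S : Set (ℝ × ℝ)) \ {x})

/-- A `◊`-squared Horton set with parameters `m` and `k`: each point `p` of an underlying
squared Horton set of `m = r²` points (the set `(grid r).image f`) is replaced by a small
`◊`-set `D p` of `k` points, consisting of four slightly concave circular arcs with at
least `⌊k/4⌋` points each, subject to the orientation and convexity properties (1)–(4).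
The resulting point set is `((grid r).image f).biUnion D`, of `n = k·m` points. -/
structure DiamondSquaredHorton (m k : ℕ) where
  /-- `√m`. -/
  r : ℕ
  hm : m = r ^ 2
  /-- perturbation parameter of the underlying squared Horton set -/
  ε : ℝ
  /-- perturbation map of the underlying squared Horton set -/
  f : ℝ × ℝ → ℝ × ℝ
  sqH : IsSquaredHorton r ε f
  /-- the `◊` replacing each point of the underlying squared Horton set -/
  D : ℝ × ℝ → Finset (ℝ × ℝ)
  /-- the four arcs of each `◊` -/
  arc : ℝ × ℝ → Fin 4 → Finset (ℝ × ℝ)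
  card_D : ∀ p ∈ (grid r).image f, (D p).card = k
  disj : ∀ p ∈ (grid r).image f, ∀ q ∈ (grid r).image f, p ≠ q → Disjoint (D p) (D q)
  arc_union : ∀ p ∈ (grid r).image f, D p = arc p 0 ∪ arc p 1 ∪ arc p 2 ∪ arc p 3
  arc_card : ∀ p ∈ (grid r).image f, ∀ i : Fin 4, k / 4 ≤ (arc p i).card
  /-- each arc lies on a circle -/
  arc_circle : ∀ p ∈ (grid r).image f, ∀ i : Fin 4,
    ∃ (o : ℝ × ℝ) (ρ : ℝ), ∀ x ∈ arc p i, elen x o = ρ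
  /-- property (1): triples of points from three different `◊`s have the same orientation
  as the corresponding triple of points of the underlying squared Horton set -/
  orient_pres : ∀ pi ∈ (grid r).image f, ∀ pj ∈ (grid r).image f, ∀ pl ∈ (grid r).image f,
    pi ≠ pj → pi ≠ pl → pj ≠ pl →
    ∀ qi ∈ D pi, ∀ qj ∈ D pj, ∀ ql ∈ D pl,
      orient qi qj ql ≠ 0 ∧ (0 < orient pi pj pl ↔ 0 < orient qi qj ql)
  /-- property (2): any two distinct `◊`s have a pair of arcs in convex position whose
  convex hull contains no further point of the whole set -/
  convex_arcs : ∀ p ∈ (grid r).image f, ∀ q ∈ (grid r).image f, p ≠ q →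
    ∃ i j : Fin 4, ConvexPos (arc p i ∪ arc q j) ∧
      ∀ x ∈ ((grid r).image f).biUnion D,
        x ∈ convexHull ℝ (↑(arc p i ∪ arc q j) : Set (ℝ × ℝ)) → x ∈ arc p i ∪ arc q j
  /-- property (3) -/
  five_prop : ∀ a ∈ (grid r).image f, ∀ b ∈ (grid r).image f, ∀ c ∈ (grid r).image f,
    ∀ d ∈ (grid r).image f, ∀ e ∈ (grid r).image f,
    a ≠ b → a ≠ c → a ≠ d → a ≠ e → b ≠ c → b ≠ d → b ≠ e → c ≠ d → c ≠ e → d ≠ e →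
    convexHull ℝ (↑(D a ∪ D b) : Set (ℝ × ℝ)) ∩
        convexHull ℝ (↑(D a ∪ D c) : Set (ℝ × ℝ)) ∩
        convexHull ℝ (↑(D d ∪ D e) : Set (ℝ × ℝ)) = ∅
  /-- property (4) -/
  six_prop : ∀ a ∈ (grid r).image f, ∀ b ∈ (grid r).image f, ∀ c ∈ (grid r).image f,
    ∀ d ∈ (grid r).image f, ∀ e ∈ (grid r).image f, ∀ g ∈ (grid r).image f,
    a ≠ b → a ≠ c → a ≠ d → a ≠ e → a ≠ g → b ≠ c → b ≠ d → b ≠ e → b ≠ g →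
    c ≠ d → c ≠ e → c ≠ g → d ≠ e → d ≠ g → e ≠ g →
    convexHull ℝ (↑(D a ∪ D b) : Set (ℝ × ℝ)) ∩
        convexHull ℝ (↑(D c ∪ D d) : Set (ℝ × ℝ)) ∩
        convexHull ℝ (↑(D e ∪ D g) : Set (ℝ × ℝ)) = ∅

/-- The point set of a `◊`-squared Horton set. -/
def DiamondSquaredHorton.pts {m k : ℕ} (c : DiamondSquaredHorton m k) : Finset (ℝ × ℝ) :=
  ((grid c.r).image c.f).biUnion c.D


theorem orient_rot (a b c : ℝ × ℝ) : orient a b c = orient b c a := by unfold orient; ring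

theorem orient_swap (a b c : ℝ × ℝ) : orient b a c = - orient a b c := by unfold orient; ring

theorem orient_swap' (a b c : ℝ × ℝ) : orient a c b = - orient a b c := by unfold orient; ring

/-- strictly inside a positively oriented triangle -/
def posTri (a b c s : ℝ × ℝ) : Prop := 0 < orient a b s ∧ 0 < orient b c s ∧ 0 < orient c a s

/-- strictly inside a triangle -/
def inTri (a b c s : ℝ × ℝ) : Prop := posTri a b c s ∨ posTri a c b s

theorem inTri_swap {a b c s : ℝ × ℝ} (h : inTri a b c s) : inTri a c b s := Or.symm h

theorem inTri_rot {a b c s : ℝ × ℝ} (h : inTri a b c s) : inTri b c a s := by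
  unfold inTri posTri at *; tauto

def spos : Bool → ℝ → Prop
  | true, x => 0 < x
  | false, x => x < 0

def sres : Bool → ℕ → ℕ → Prop
  | true, t, k => (k + 1) % 2 ^ t = 0
  | false, t, k => k % 2 ^ t = 0

theorem inTri_of_spos {σ : Bool} {a b c s : ℝ × ℝ} (h1 : spos σ (orient a b s))
    (h2 : spos σ (orient b c s)) (h3 : spos σ (orient c a s)) : inTri a b c s := by
  cases σ
  · right
    simp only [spos] at *
    refine ⟨?_, ?_, ?_⟩
    · rw [orient_swap]; linarith
    · rw [orient_swap]; linarith
    · rw [orient_swap]; linarith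
  · left; exact ⟨h1, h2, h3⟩

/-- Abstract Horton sequences (in terms of orientations only). -/
inductive HSeq : ℕ → (ℕ → ℝ × ℝ) → Prop
  | small (n : ℕ) (P : ℕ → ℝ × ℝ) (h : n ≤ 2) : HSeq n P
  | split (n : ℕ) (P : ℕ → ℝ × ℝ) (h0 : HSeq ((n + 1) / 2) (fun i => P (2 * i)))
      (h1 : HSeq (n / 2) (fun i => P (2 * i + 1)))
      (hh : ∀ x y z, x < y → 2 * y + 1 < n → 2 * z < n →
        orient (P (2 * x + 1)) (P (2 * y + 1)) (P (2 * z)) < 0)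
      (hd : ∀ x y z, x < y → 2 * y < n → 2 * z + 1 < n →
        0 < orient (P (2 * x)) (P (2 * y)) (P (2 * z + 1))) : HSeq n P

theorem HSeq.congr {n : ℕ} {P : ℕ → ℝ × ℝ} (h : HSeq n P) : ∀ Q : ℕ → ℝ × ℝ,
    (∀ x y z, x < n → y < n → z < n → x ≠ y → x ≠ z → y ≠ z →
      (0 < orient (P x) (P y) (P z) → 0 < orient (Q x) (Q y) (Q z))) → HSeq n Q := by
  induction h with
  | small n P h => intro Q _; exact .small _ _ h
  | split n P h0 h1 hh hd ih0 ih1 =>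
    intro Q hQ
    refine .split _ _ (ih0 _ ?_) (ih1 _ ?_) ?_ ?_
    · intro x y z hx hy hz h1 h2 h3
      exact hQ _ _ _ (by omega) (by omega) (by omega) (by omega) (by omega) (by omega)
    · intro x y z hx hy hz h1 h2 h3
      exact hQ _ _ _ (by omega) (by omega) (by omega) (by omega) (by omega) (by omega)
    · intro x y z hxy hy hz
      have := hh x y z hxy hy hz
      have := hQ (2*y+1) (2*x+1) (2*z) (by omega) (by omega) (by omega) (by omega) (by omega)
        (by omega) (by rw [orient_swap]; linarith)
      rw [orient_swap] at this; linarith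
    · intro x y z hxy hy hz
      exact hQ _ _ _ (by omega) (by omega) (by omega) (by omega) (by omega)
        (by omega) (hd x y z hxy hy hz)

theorem HSeq.vis {n : ℕ} {P : ℕ → ℝ × ℝ} (h : HSeq n P) : ∀ (σ : Bool) (i l : ℕ), i < l → l < n →
    (∀ j, i < j → j < l → ¬ spos σ (orient (P i) (P l) (P j))) →
    ∃ t, l = i + 2 ^ t ∧ sres σ t i := by
  induction h with
  | small n P h =>
    intro σ i l hil hl _
    refine ⟨0, by simp; omega, ?_⟩
    cases σ <;> simp [sres, Nat.mod_one]
  | split n P h0 h1 hh hd ih0 ih1 =>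
    intro σ i l hil hl hv
    by_cases hl1 : l = i + 1
    · refine ⟨0, by simp; omega, ?_⟩
      cases σ <;> simp [sres, Nat.mod_one]
    cases σ
    · -- visible from below
      simp only [spos, sres] at *
      obtain ⟨i', hi | hi⟩ : ∃ i', i = 2 * i' ∨ i = 2 * i' + 1 := ⟨i / 2, by omega⟩
      <;> obtain ⟨l', hl' | hl'⟩ : ∃ l', l = 2 * l' ∨ l = 2 * l' + 1 := ⟨l / 2, by omega⟩
      · obtain ⟨t, ht, hr⟩ := ih0 false i' l' (by omega) (by omega) (by
          intro j h1 h2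
          have := hv (2 * j) (by omega) (by omega)
          rw [hi, hl'] at this; exact this)
        refine ⟨t + 1, by rw [pow_succ]; omega, ?_⟩
        rw [hi, pow_succ, mul_comm, Nat.mul_mod_mul_right, hr]
      · exfalso
        subst hi hl'
        have := hv (2 * (i' + 1)) (by omega) (by omega)
        have h3 := hd i' (i' + 1) l' (by omega) (by omega) (by omega)
        rw [orient_swap'] at this; linarith
      · exfalso
        subst hi hl'
        have := hv (2 * (i' + 1)) (by omega) (by omega)
        have h3 := hd (i' + 1) l' i' (by omega) (by omega) (by omega)
        rw [orient_swap', orient_rot] at this; linarith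
      · exfalso
        subst hi hl'
        have := hv (2 * (i' + 1)) (by omega) (by omega)
        have h3 := hh i' l' (i' + 1) (by omega) (by omega) (by omega)
        linarith
    · simp only [spos, sres] at *
      obtain ⟨i', hi | hi⟩ : ∃ i', i = 2 * i' ∨ i = 2 * i' + 1 := ⟨i / 2, by omega⟩
      <;> obtain ⟨l', hl' | hl'⟩ : ∃ l', l = 2 * l' ∨ l = 2 * l' + 1 := ⟨l / 2, by omega⟩
      · exfalso
        subst hi hl'
        have := hv (2 * i' + 1) (by omega) (by omega)
        have h3 := hd i' l' i' (by omega) (by omega) (by omega)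
        linarith
      · exfalso
        subst hi hl'
        have := hv (2 * i' + 1) (by omega) (by omega)
        have h3 := hh i' l' i' (by omega) (by omega) (by omega)
        rw [orient_swap', orient_rot] at this; linarith
      · exfalso
        subst hi hl'
        have := hv (2 * (l' - 1) + 1) (by omega) (by omega)
        have h3 := hh i' (l' - 1) l' (by omega) (by omega) (by omega)
        rw [orient_swap'] at this; linarith
      · obtain ⟨t, ht, hr⟩ := ih1 true i' l' (by omega) (by omega) (by
          intro j h1 h2
          have := hv (2 * j + 1) (by omega) (by omega)
          rw [hi, hl'] at this; exact this)
        refine ⟨t + 1, by rw [pow_succ]; omega, ?_⟩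
        rw [hi, pow_succ, show 2 * i' + 1 + 1 = (i' + 1) * 2 by ring, Nat.mul_mod_mul_right, hr]

/-- frame of an empty triangle in a Horton sequence -/
def SFr (n : ℕ) (P : ℕ → ℝ × ℝ) (α b c : ℕ) : Prop :=
  ∃ (t u : ℕ) (σ : Bool), c = b + 2 ^ (t + (u + 1)) ∧ c < n ∧ α < n ∧
    (b + 2 ^ u) % 2 ^ (u + 1) = α % 2 ^ (u + 1) ∧ sres σ t (b / 2 ^ (u + 1)) ∧
    ∀ x y, x < y → y < n → x % 2 ^ (u + 1) = b % 2 ^ (u + 1) → y % 2 ^ (u + 1) = b % 2 ^ (u + 1) →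
      spos σ (orient (P x) (P y) (P α))

/-- symmetric closure of a relation on triples -/
def Sym3 {T : Type} (Fr : T → T → T → Prop) (a b c : T) : Prop :=
  Fr a b c ∨ Fr a c b ∨ Fr b a c ∨ Fr b c a ∨ Fr c a b ∨ Fr c b a

theorem Sym3.mono {T U : Type} {Fr : T → T → T → Prop} {Fr' : U → U → U → Prop} {f : T → U}
    (h : ∀ a b c, Fr a b c → Fr' (f a) (f b) (f c)) {a b c : T} (hs : Sym3 Fr a b c) :
    Sym3 Fr' (f a) (f b) (f c) := by
  unfold Sym3 at *
  rcases hs with h1 | h1 | h1 | h1 | h1 | h1 <;> have := h _ _ _ h1 <;> tauto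

theorem Sym3.rot {T : Type} {Fr : T → T → T → Prop} {a b c : T} (hs : Sym3 Fr a b c) :
    Sym3 Fr b c a := by
  unfold Sym3 at *
  tauto

theorem lift_mod (u x b ρ : ℕ) (hρ : ρ < 2)
    (hx : x % 2 ^ (u + 1) = (2 * b + ρ) % 2 ^ (u + 1)) :
    ∃ x', x = 2 * x' + ρ ∧ x' % 2 ^ u = b % 2 ^ u := by
  have h1 : (x : ℕ) ≡ 2 * b + ρ [MOD 2 ^ (u + 1)] := hx
  have h2 : x ≡ 2 * b + ρ [MOD 2] := h1.of_dvd (dvd_pow_self 2 (by omega))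
  have h3 : x % 2 = (2 * b + ρ) % 2 := h2
  refine ⟨x / 2, by omega, ?_⟩
  have h4 : x = 2 * (x / 2) + ρ := by omega
  rw [h4] at h1
  have h5 := Nat.ModEq.add_right_cancel' ρ h1
  rw [pow_succ, mul_comm (2 ^ u)] at h5
  exact Nat.ModEq.mul_left_cancel' (by norm_num) h5

theorem SFr.lift {n n' : ℕ} {P : ℕ → ℝ × ℝ} {ρ : ℕ} (hρ : ρ < 2)
    (hn : ∀ x, x < n' ↔ 2 * x + ρ < n) {α b c : ℕ}
    (h : SFr n' (fun i => P (2 * i + ρ)) α b c) :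
    SFr n P (2 * α + ρ) (2 * b + ρ) (2 * c + ρ) := by
  obtain ⟨t, u, σ, hc, hcn, han, hab, hres, hor⟩ := h
  have e1 : (2 : ℕ) ^ (u + 1 + 1) = 2 * 2 ^ (u + 1) := by ring
  refine ⟨t, u + 1, σ, ?_, (hn _).1 hcn, (hn _).1 han, ?_, ?_, ?_⟩
  · rw [hc]; ring
  · have h1 : b + 2 ^ u ≡ α [MOD 2 ^ (u + 1)] := hab
    have h2 := (Nat.ModEq.mul_left' 2 h1).add_right ρ
    rw [← e1] at h2
    have e2 : 2 * b + ρ + 2 ^ (u + 1) = 2 * (b + 2 ^ u) + ρ := by ring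
    rw [e2]; exact h2
  · rw [e1, ← Nat.div_div_eq_div_mul]
    have : (2 * b + ρ) / 2 = b := by omega
    rw [this]; exact hres
  · intro x y hxy hy hx hy'
    obtain ⟨x', rfl, hx'⟩ := lift_mod _ _ _ _ hρ hx
    obtain ⟨y', rfl, hy''⟩ := lift_mod _ _ _ _ hρ hy'
    exact hor x' y' (by omega) ((hn _).2 hy) hx' hy''

theorem HSeq.emp {n : ℕ} {P : ℕ → ℝ × ℝ} (h : HSeq n P) : ∀ (i j l : ℕ), i < n → j < n → l < n →
    i ≠ j → i ≠ l → j ≠ l → (∀ d, d < n → ¬ inTri (P i) (P j) (P l) (P d)) →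
    Sym3 (SFr n P) i j l := by
  induction h with
  | small n P h => intro i j l; omega
  | split n P h0 h1 hh hd ih0 ih1 =>
    have key0 : ∀ b c a, b < c → 2 * c < n → 2 * a + 1 < n →
        (∀ d, d < n → ¬ inTri (P (2 * b)) (P (2 * c)) (P (2 * a + 1)) (P d)) →
        SFr n P (2 * a + 1) (2 * b) (2 * c) := by
      intro b c a hbc hc ha he
      obtain ⟨t, ht, hr⟩ := h0.vis true b c hbc (by omega) (by
        intro j h1 h2 h3
        refine he (2 * j) (by omega) (inTri_of_spos (σ := true) h3 ?_ ?_)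
        · rw [← orient_rot]; exact hd j c a (by omega) (by omega) (by omega)
        · rw [orient_rot]; exact hd b j a (by omega) (by omega) (by omega))
      refine ⟨t, 0, true, by rw [ht]; ring, hc, ha, by norm_num, by simpa using hr, ?_⟩
      intro x y hxy hy hx hy'
      simp at hx hy'
      have := hd (x / 2) (y / 2) a (by omega) (by omega) (by omega)
      rwa [show 2 * (x / 2) = x by omega, show 2 * (y / 2) = y by omega] at this
    have key1 : ∀ b c a, b < c → 2 * c + 1 < n → 2 * a < n →
        (∀ d, d < n → ¬ inTri (P (2 * b + 1)) (P (2 * c + 1)) (P (2 * a)) (P d)) →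
        SFr n P (2 * a) (2 * b + 1) (2 * c + 1) := by
      intro b c a hbc hc ha he
      obtain ⟨t, ht, hr⟩ := h1.vis false b c hbc (by omega) (by
        intro j h1 h2 h3
        refine he (2 * j + 1) (by omega) (inTri_of_spos (σ := false) h3 ?_ ?_)
        · rw [← orient_rot]; exact hh j c a (by omega) (by omega) (by omega)
        · rw [orient_rot]; exact hh b j a (by omega) (by omega) (by omega))
      have e : (2 * b + 1) / 2 = b := by omega
      refine ⟨t, 0, false, by rw [ht]; ring, hc, ha, by norm_num; omega, by simpa [e] using hr, ?_⟩
      intro x y hxy hy hx hy'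
      simp at hx hy'
      have := hh (x / 2) (y / 2) a (by omega) (by omega) (by omega)
      rwa [show 2 * (x / 2) + 1 = x by omega, show 2 * (y / 2) + 1 = y by omega] at this
    -- two of the same parity first
    have mix : ∀ i j l, i < n → j < n → l < n → i ≠ j → i % 2 = j % 2 → i % 2 ≠ l % 2 →
        (∀ d, d < n → ¬ inTri (P i) (P j) (P l) (P d)) → Sym3 (SFr n P) i j l := by
      intro i j l hi hj hl hij hp hq he
      have he' : ∀ d, d < n → ¬ inTri (P j) (P i) (P l) (P d) :=
        fun d hd h => he d hd (inTri_swap (inTri_rot (inTri_rot h)) |> fun h => by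
          unfold inTri posTri at *; tauto)
      obtain ⟨i', hi' | hi'⟩ : ∃ i', i = 2 * i' ∨ i = 2 * i' + 1 := ⟨i / 2, by omega⟩
      · obtain ⟨j', rfl⟩ : ∃ j', j = 2 * j' := ⟨j / 2, by omega⟩
        obtain ⟨l', rfl⟩ : ∃ l', l = 2 * l' + 1 := ⟨l / 2, by omega⟩
        subst hi'
        rcases lt_or_gt_of_ne hij with h | h
        · have := key0 i' j' l' (by omega) hj hl he
          unfold Sym3; tauto
        · have := key0 j' i' l' (by omega) hi hl he'
          unfold Sym3; tauto
      · obtain ⟨j', rfl⟩ : ∃ j', j = 2 * j' + 1 := ⟨j / 2, by omega⟩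
        obtain ⟨l', rfl⟩ : ∃ l', l = 2 * l' := ⟨l / 2, by omega⟩
        subst hi'
        rcases lt_or_gt_of_ne hij with h | h
        · have := key1 i' j' l' (by omega) hj hl he
          unfold Sym3; tauto
        · have := key1 j' i' l' (by omega) hi hl he'
          unfold Sym3; tauto
    intro i j l hi hj hl hij hil hjl he
    by_cases p1 : i % 2 = j % 2
    · by_cases p2 : i % 2 = l % 2
      · obtain ⟨i', hi' | hi'⟩ : ∃ i', i = 2 * i' ∨ i = 2 * i' + 1 := ⟨i / 2, by omega⟩
        · obtain ⟨j', rfl⟩ : ∃ j', j = 2 * j' := ⟨j / 2, by omega⟩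
          obtain ⟨l', rfl⟩ : ∃ l', l = 2 * l' := ⟨l / 2, by omega⟩
          subst hi'
          have := ih0 i' j' l' (by omega) (by omega) (by omega) (by omega) (by omega) (by omega)
            (fun d hd => he (2 * d) (by omega))
          exact this.mono (f := fun x => 2 * x + 0)
            (fun a b c h => SFr.lift (P := P) (ρ := 0) (by omega) (by omega) h)
        · obtain ⟨j', rfl⟩ : ∃ j', j = 2 * j' + 1 := ⟨j / 2, by omega⟩
          obtain ⟨l', rfl⟩ : ∃ l', l = 2 * l' + 1 := ⟨l / 2, by omega⟩
          subst hi'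
          have := ih1 i' j' l' (by omega) (by omega) (by omega) (by omega) (by omega) (by omega)
            (fun d hd => he (2 * d + 1) (by omega))
          exact this.mono (f := fun x => 2 * x + 1)
            (fun a b c h => SFr.lift (P := P) (ρ := 1) (by omega) (by omega) h)
      · exact mix i j l hi hj hl hij p1 p2 he
    · by_cases p2 : i % 2 = l % 2
      · exact (mix l i j hl hi hj (by omega) (by omega) (by omega)
          (fun d hd h => he d hd (inTri_rot h))).rot
      · exact (mix j l i hj hl hi (by omega) (by omega) (by omega)
          (fun d hd h => he d hd (inTri_rot (inTri_rot h)))).rot.rot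

def pt (a v : ℤ × ℤ) (i : ℤ) : ℤ × ℤ := (a.1 + i * v.1, a.2 + i * v.2)

def inBox (r : ℕ) (z : ℤ × ℤ) : Prop := 1 ≤ z.1 ∧ z.1 ≤ r ∧ 1 ≤ z.2 ∧ z.2 ≤ r

def idet3 (a b c : ℤ × ℤ) : ℤ := (b.1 - a.1) * (c.2 - a.2) - (b.2 - a.2) * (c.1 - a.1)

def posv (v : ℤ × ℤ) : Prop := 0 < v.1 ∨ (v.1 = 0 ∧ 0 < v.2)

def sgn : Bool → ℤ
  | true => 1
  | false => -1

theorem btw1 (a v r i k j : ℤ) (h1 : 1 ≤ a + i * v) (h2 : a + i * v ≤ r) (h3 : 1 ≤ a + j * v)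
    (h4 : a + j * v ≤ r) (hik : i ≤ k) (hkj : k ≤ j) : 1 ≤ a + k * v ∧ a + k * v ≤ r := by
  rcases le_total 0 v with h | h
  · constructor <;> nlinarith
  · constructor <;> nlinarith

theorem inBox.btw {r : ℕ} {a v : ℤ × ℤ} {i j k : ℤ} (h1 : inBox r (pt a v i))
    (h2 : inBox r (pt a v j)) (hik : i ≤ k) (hkj : k ≤ j) : inBox r (pt a v k) := by
  obtain ⟨p1, p2, p3, p4⟩ := h1
  obtain ⟨q1, q2, q3, q4⟩ := h2
  obtain ⟨x1, x2⟩ := btw1 a.1 v.1 r i k j p1 p2 q1 q2 hik hkj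
  obtain ⟨y1, y2⟩ := btw1 a.2 v.2 r i k j p3 p4 q3 q4 hik hkj
  exact ⟨x1, x2, y1, y2⟩

theorem pt_zero (a v : ℤ × ℤ) : pt a v 0 = a := by simp [pt]

theorem pt_pt (a v : ℤ × ℤ) (i j : ℤ) : pt (pt a v i) v j = pt a v (i + j) := by
  simp only [pt, Prod.mk.injEq]; constructor <;> ring

theorem pt_inj {a v : ℤ × ℤ} (hv : posv v) {i j : ℤ} (h : pt a v i = pt a v j) : i = j := by
  simp only [pt, Prod.mk.injEq] at h
  rcases hv with hv | hv
  · have : (i - j) * v.1 = 0 := by linarith [h.1]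
    rcases mul_eq_zero.1 this with h | h <;> omega
  · have : (i - j) * v.2 = 0 := by linarith [h.2]
    rcases mul_eq_zero.1 this with h | h <;> omega

theorem par {v : ℤ × ℤ} (hc : IsCoprime v.1 v.2) {x y : ℤ} (h : v.1 * y - v.2 * x = 0) :
    ∃ n, x = n * v.1 ∧ y = n * v.2 := by
  obtain ⟨p, q, hpq⟩ := hc
  refine ⟨p * x + q * y, ?_, ?_⟩
  · linear_combination (-x) * hpq - q * h
  · linear_combination (-y) * hpq + p * h

theorem par_pt {v : ℤ × ℤ} (hc : IsCoprime v.1 v.2) {a b : ℤ × ℤ}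
    (h : v.1 * (b.2 - a.2) - v.2 * (b.1 - a.1) = 0) : ∃ n, b = pt a v n := by
  obtain ⟨n, h1, h2⟩ := par hc h
  exact ⟨n, Prod.ext (by simp [pt]; linarith) (by simp [pt]; linarith)⟩

theorem prim_dir {a b : ℤ × ℤ} (h : a ≠ b) : ∃ (v : ℤ × ℤ) (g : ℤ), IsCoprime v.1 v.2 ∧ posv v ∧
    b = pt a v g ∧ g ≠ 0 ∧ |g| = Int.gcd (b.1 - a.1) (b.2 - a.2) := by
  have hg : 0 < Int.gcd (b.1 - a.1) (b.2 - a.2) := by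
    rw [Int.gcd_pos_iff]
    by_contra hcon
    push Not at hcon
    exact h (Prod.ext (by omega) (by omega))
  obtain ⟨x, y, hxy, h1, h2⟩ := Int.exists_gcd_one hg
  set g := Int.gcd (b.1 - a.1) (b.2 - a.2)
  have hc : IsCoprime x y := Int.isCoprime_iff_gcd_eq_one.2 hxy
  have hne : ¬ (x = 0 ∧ y = 0) := by
    rintro ⟨rfl, rfl⟩
    simp at hxy
  by_cases hp : posv (x, y)
  · refine ⟨(x, y), g, hc, hp, Prod.ext ?_ ?_, by omega, by simp⟩
    · simp [pt]; linarith
    · simp [pt]; linarith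
  · refine ⟨(-x, -y), -g, hc.neg_neg, ?_, Prod.ext ?_ ?_, by omega, by simp⟩
    · simp only [posv] at *; omega
    · simp [pt]; linarith
    · simp [pt]; linarith

theorem line_start {r : ℕ} {b v : ℤ × ℤ} (hv : posv v) (hb : inBox r b) :
    ∃ (a0 : ℤ × ℤ) (i : ℕ), inBox r a0 ∧ ¬ inBox r (pt a0 v (-1)) ∧ b = pt a0 v i := by
  have hex : ∃ i : ℕ, ¬ inBox r (pt b v (-(i : ℤ))) := by
    refine ⟨r, ?_⟩
    rintro ⟨h1, h2, h3, h4⟩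
    obtain ⟨p1, p2, p3, p4⟩ := hb
    simp only [pt] at *
    rcases hv with hv | hv
    · nlinarith
    · nlinarith [hv.2]
  have hs := Nat.find_spec hex
  have hm := fun i => @Nat.find_min _ _ hex i
  set k := Nat.find hex
  have hk : k ≠ 0 := by
    intro h0; rw [h0] at hs; simp [pt_zero] at hs; exact hs hb
  obtain ⟨j, hj⟩ := Nat.exists_eq_succ_of_ne_zero hk
  refine ⟨pt b v (-(j : ℤ)), j, by simpa using hm j (by omega), ?_, ?_⟩
  · rw [pt_pt]; convert hs using 3; rw [hj]; push_cast; ring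
  · rw [pt_pt]; simp [pt_zero]

theorem line_len {r : ℕ} {a0 v : ℤ × ℤ} (hv : posv v) (hb : inBox r a0) :
    ∃ n : ℕ, ∀ i : ℕ, inBox r (pt a0 v i) ↔ i < n := by
  have hex : ∃ i : ℕ, ¬ inBox r (pt a0 v i) := by
    refine ⟨r, ?_⟩
    rintro ⟨h1, h2, h3, h4⟩
    obtain ⟨p1, p2, p3, p4⟩ := hb
    simp only [pt] at *
    rcases hv with hv | hv
    · nlinarith
    · nlinarith [hv.2]
  refine ⟨Nat.find hex, fun i => ⟨fun h => ?_, fun h => by simpa using Nat.find_min hex h⟩⟩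
  by_contra hcon
  push Not at hcon
  refine Nat.find_spec hex (inBox.btw (i := 0) (j := i) (by rwa [pt_zero]) h ?_ ?_)
  · positivity
  · exact_mod_cast hcon

theorem start_uniq {r : ℕ} {a0 a1 v : ℤ × ℤ} (h0 : inBox r a0) (h0' : ¬ inBox r (pt a0 v (-1)))
    (h1 : inBox r a1) (h1' : ¬ inBox r (pt a1 v (-1))) {n : ℤ} (h : a1 = pt a0 v n) : a0 = a1 := by
  rcases lt_trichotomy n 0 with hn | hn | hn
  · exfalso; apply h0'
    exact inBox.btw (i := n) (j := 0) (h ▸ h1) (by rwa [pt_zero]) (by omega) (by omega)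
  · rw [h, hn, pt_zero]
  · exfalso; apply h1'
    rw [h, pt_pt]
    exact inBox.btw (i := 0) (j := n) (by rwa [pt_zero]) (h ▸ h1) (by omega) (by omega)

structure Good (r : ℕ) (R : ℤ × ℤ → ℝ × ℝ) : Prop where
  ori : ∀ a b c, inBox r a → inBox r b → inBox r c → 0 < idet3 a b c →
    0 < orient (R a) (R b) (R c)
  hor : ∀ (v a0 : ℤ × ℤ), IsCoprime v.1 v.2 → posv v → inBox r a0 → ¬ inBox r (pt a0 v (-1)) →
    ∀ n : ℕ, (∀ i : ℕ, inBox r (pt a0 v i) ↔ i < n) → HSeq n (fun i => R (pt a0 v i))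

theorem Good.sp {r : ℕ} {R : ℤ × ℤ → ℝ × ℝ} (hG : Good r R) {σ : Bool} {a b c : ℤ × ℤ}
    (ha : inBox r a) (hb : inBox r b) (hc : inBox r c) (h : 0 < sgn σ * idet3 a b c) :
    spos σ (orient (R a) (R b) (R c)) := by
  cases σ
  · simp only [sgn, spos] at *
    have := hG.ori b a c hb ha hc (by unfold idet3 at *; nlinarith)
    rw [orient_swap] at this; linarith
  · simp only [sgn, spos] at *
    exact hG.ori a b c ha hb hc (by linarith)

/-- frame with all the data explicit -/
structure GFr (r : ℕ) (R : ℤ × ℤ → ℝ × ℝ) (v : ℤ × ℤ) (t u : ℕ) (h : ℤ) (σ : Bool)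
    (a0 : ℤ × ℤ) (i : ℕ) (a b c : ℤ × ℤ) : Prop where
  cop : IsCoprime v.1 v.2
  pos : posv v
  ha : inBox r a
  hb : inBox r b
  hc : inBox r c
  h0 : inBox r a0
  h0' : ¬ inBox r (pt a0 v (-1))
  eb : b = pt a0 v i
  ec : c = pt a0 v (i + 2 ^ (t + u) : ℕ)
  hh : v.1 * (a.2 - b.2) - v.2 * (a.1 - b.1) = h
  h2 : |h| ≤ 2
  hσ : 0 ≤ sgn σ * h
  res : sres σ t (i / 2 ^ u)
  deg : h = 0 → ∃ u' α : ℕ, u = u' + 1 ∧ a = pt a0 v α ∧ (i + 2 ^ u') % 2 ^ u = α % 2 ^ u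
  ndeg : h ≠ 0 → u = 0
  ori : ∀ x y : ℕ, x < y → x % 2 ^ u = i % 2 ^ u → y % 2 ^ u = i % 2 ^ u →
    inBox r (pt a0 v x) → inBox r (pt a0 v y) → spos σ (orient (R (pt a0 v x)) (R (pt a0 v y)) (R a))

def Fr (r : ℕ) (R : ℤ × ℤ → ℝ × ℝ) (a b c : ℤ × ℤ) : Prop :=
  ∃ v t u h σ a0 i, GFr r R v t u h σ a0 i a b c

theorem frame_deg {r : ℕ} {R : ℤ × ℤ → ℝ × ℝ} (hG : Good r R) {a b c : ℤ × ℤ}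
    (ha : inBox r a) (hb : inBox r b) (hc : inBox r c) (hab : a ≠ b) (hac : a ≠ c) (hbc : b ≠ c)
    (hcol : idet3 a b c = 0)
    (hemp : ∀ d, inBox r d → ¬ inTri (R a) (R b) (R c) (R d)) : Sym3 (Fr r R) a b c := by
  obtain ⟨v, g, hcop, hpos, hb', hg, -⟩ := prim_dir hab
  obtain ⟨n1, hc'⟩ : ∃ n, c = pt a v n := by
    apply par_pt hcop
    have : g * (v.1 * (c.2 - a.2) - v.2 * (c.1 - a.1)) = 0 := by
      rw [hb'] at hcol; simp only [pt, idet3] at hcol; linarith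
    rcases mul_eq_zero.1 this with h | h
    · exact absurd h hg
    · exact h
  have hst : ∃ (a0 : ℤ × ℤ), inBox r a0 ∧ ¬ inBox r (pt a0 v (-1)) ∧ ∃ i : ℕ, a = pt a0 v i := by
    obtain ⟨a0, i, x, y, z⟩ := line_start hpos ha
    exact ⟨a0, x, y, i, z⟩
  obtain ⟨a0, h0, h0', i, hi⟩ := hst
  have lift : ∀ n : ℤ, inBox r (pt a v n) → ∃ j : ℕ, pt a v n = pt a0 v j := by
    intro n hn
    rw [hi, pt_pt] at *
    by_cases hneg : 0 ≤ (i : ℤ) + n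
    · exact ⟨((i : ℤ) + n).toNat, by rw [Int.toNat_of_nonneg hneg]⟩
    · exact absurd (inBox.btw (i := i + n) (j := 0) hn (by rwa [pt_zero]) (by omega) (by omega)) h0'
  obtain ⟨j, hj⟩ := lift g (hb' ▸ hb)
  obtain ⟨l, hl⟩ := lift n1 (hc' ▸ hc)
  rw [← hb'] at hj
  rw [← hc'] at hl
  obtain ⟨n, hn⟩ := line_len hpos h0
  have hS := hG.hor v a0 hcop hpos h0 h0' n hn
  have := hS.emp i j l ((hn i).1 (hi ▸ ha)) ((hn j).1 (hj ▸ hb)) ((hn l).1 (hl ▸ hc))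
    (by rintro rfl; exact hab (hi.trans hj.symm)) (by rintro rfl; exact hac (hi.trans hl.symm))
    (by rintro rfl; exact hbc (hj.trans hl.symm))
    (by
      intro d hd
      have := hemp (pt a0 v d) ((hn d).2 hd)
      rw [hi, hj, hl] at this
      exact this)
  rw [hi, hj, hl]
  refine this.mono (f := fun x : ℕ => pt a0 v x) ?_
  rintro α β γ ⟨t, u, σ, e1, hγ, hα, hm, hres, hor⟩
  refine ⟨v, t, u + 1, 0, σ, a0, β, hcop, hpos, (hn _).2 hα, (hn _).2 ?_, (hn _).2 hγ, h0, h0',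
    rfl, by rw [e1], by simp only [pt]; ring, by simp, by simp, hres, fun _ => ⟨u, α, rfl, rfl, hm⟩,
    by simp, ?_⟩
  · rw [e1] at hγ; exact lt_of_le_of_lt (Nat.le_add_right _ _) hγ
  · intro x y hxy hx hy _ hy'
    exact hor x y hxy ((hn y).1 hy') hx hy

theorem wavg {r : ℕ} {q g p x a b c : ℤ} (hq : 0 < q) (hg : 0 < g) (hp : p ≤ q)
    (hs : q - p + g ≤ q * g) (ha : 1 ≤ a ∧ a ≤ r) (hb : 1 ≤ b ∧ b ≤ r) (hc : 1 ≤ c ∧ c ≤ r)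
    (hx : q * g * x = (q - p) * c + g * a + (q * g - (q - p) - g) * b) : 1 ≤ x ∧ x ≤ r := by
  have hqg : 0 < q * g := mul_pos hq hg
  have n1 : 0 ≤ q - p := by linarith
  have n2 : 0 ≤ q * g - (q - p) - g := by linarith
  constructor
  · have : q * g * 1 ≤ q * g * x := by
      rw [hx]
      nlinarith [mul_le_mul_of_nonneg_left hc.1 n1, mul_le_mul_of_nonneg_left ha.1 hg.le,
        mul_le_mul_of_nonneg_left hb.1 n2]
    exact le_of_mul_le_mul_left this hqg
  · have : q * g * x ≤ q * g * r := by
      rw [hx]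
      nlinarith [mul_le_mul_of_nonneg_left hc.2 n1, mul_le_mul_of_nonneg_left ha.2 hg.le,
        mul_le_mul_of_nonneg_left hb.2 n2]
    exact le_of_mul_le_mul_left this hqg

theorem sgn_sq (σ : Bool) : sgn σ * sgn σ = 1 := by cases σ <;> rfl

theorem frame_ndeg0 {r : ℕ} {R : ℤ × ℤ → ℝ × ℝ} (hG : Good r R) {a b c v : ℤ × ℤ} {g : ℕ}
    (ha : inBox r a) (hb : inBox r b) (hc : inBox r c) (hcop : IsCoprime v.1 v.2) (hpos : posv v)
    (hg : 0 < g) (ec : c = pt b v g)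
    (hne : v.1 * (a.2 - b.2) - v.2 * (a.1 - b.1) ≠ 0)
    (hm1 : ∀ (n : ℤ) w, a = pt b w n → n ≤ g) (hm2 : ∀ (n : ℤ) w, a = pt c w n → n ≤ g)
    (hemp : ∀ d, inBox r d → ¬ inTri (R b) (R c) (R a) (R d)) : Fr r R a b c := by
  obtain ⟨h, hh⟩ : ∃ h, v.1 * (a.2 - b.2) - v.2 * (a.1 - b.1) = h := ⟨_, rfl⟩
  rw [hh] at hne
  obtain ⟨σ, hσ⟩ : ∃ σ, 0 < sgn σ * h := by
    rcases lt_or_gt_of_ne hne with h | h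
    · exact ⟨false, by simp [sgn]; omega⟩
    · exact ⟨true, by simp [sgn]; omega⟩
  have hbound : |h| ≤ 2 := by
    by_contra hcon
    push Not at hcon
    obtain ⟨q, hq⟩ : ∃ q, q = sgn σ * h := ⟨_, rfl⟩
    have hq' : h = sgn σ * q := by rw [hq, ← mul_assoc, sgn_sq, one_mul]
    have hq3 : 3 ≤ q := by
      rw [hq]
      cases σ <;> simp only [sgn] at * <;> rcases abs_cases h with h | h <;> omega
    obtain ⟨p0, q0, hpq⟩ := hcop
    have hcop : IsCoprime v.1 v.2 := ⟨p0, q0, hpq⟩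
    obtain ⟨P, hP1, hP2⟩ := par hcop
      (x := a.1 - b.1 + q * sgn σ * q0) (y := a.2 - b.2 - q * sgn σ * p0) (by
        linear_combination hh - q * sgn σ * hpq + hq')
    obtain ⟨k, p, hk, hp0, hpq'⟩ : ∃ k p, P = q * k + p ∧ 0 ≤ p ∧ p < q :=
      ⟨P / q, P % q, (Int.mul_ediv_add_emod P q).symm, Int.emod_nonneg _ (by omega),
        Int.emod_lt_of_pos _ (by omega)⟩
    obtain ⟨w1, hw1⟩ : ∃ w1, w1 = - sgn σ * q0 + k * v.1 := ⟨_, rfl⟩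
    obtain ⟨w2, hw2⟩ : ∃ w2, w2 = sgn σ * p0 + k * v.2 := ⟨_, rfl⟩
    have hdet : v.1 * w2 - v.2 * w1 = sgn σ := by
      rw [hw1, hw2]; linear_combination sgn σ * hpq
    have ea1 : a.1 = b.1 + p * v.1 + q * w1 := by
      rw [hw1]; linear_combination hP1 + v.1 * hk
    have ea2 : a.2 = b.2 + p * v.2 + q * w2 := by
      rw [hw2]; linear_combination hP2 + v.2 * hk
    have hgz : (0 : ℤ) < g := by exact_mod_cast hg
    have hin : q * g + p ≤ q + g := by
      by_contra hcon2
      push Not at hcon2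
      have ec1 : c.1 = b.1 + g * v.1 := by rw [ec]; rfl
      have ec2 : c.2 = b.2 + g * v.2 := by rw [ec]; rfl
      have hd : inBox r (b.1 + v.1 + w1, b.2 + v.2 + w2) := by
        have x1 := wavg (r := r) (q := q) (g := g) (p := p) (x := b.1 + v.1 + w1) (a := a.1)
          (b := b.1) (c := c.1) (by omega) hgz hpq'.le (by linarith) ⟨ha.1, ha.2.1⟩
          ⟨hb.1, hb.2.1⟩ ⟨hc.1, hc.2.1⟩ (by rw [ea1, ec1]; ring)
        have x2 := wavg (r := r) (q := q) (g := g) (p := p) (x := b.2 + v.2 + w2) (a := a.2)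
          (b := b.2) (c := c.2) (by omega) hgz hpq'.le (by linarith) ⟨ha.2.2.1, ha.2.2.2⟩
          ⟨hb.2.2.1, hb.2.2.2⟩ ⟨hc.2.2.1, hc.2.2.2⟩ (by rw [ea2, ec2]; ring)
        exact ⟨x1.1, x1.2, x2.1, x2.2⟩
      have hss := sgn_sq σ
      refine hemp _ hd (inTri_of_spos (σ := σ) (hG.sp hb hc hd ?_) (hG.sp hc ha hd ?_)
        (hG.sp ha hb hd ?_))
      · have : idet3 b c (b.1 + v.1 + w1, b.2 + v.2 + w2) = g * sgn σ := by
          simp only [idet3]; rw [ec1, ec2]; linear_combination (g : ℤ) * hdet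
        rw [this]; nlinarith
      · have : idet3 c a (b.1 + v.1 + w1, b.2 + v.2 + w2) = (p - g - q * (1 - g)) * sgn σ := by
          simp only [idet3]; rw [ec1, ec2, ea1, ea2]
          linear_combination (p - g - q * (1 - g)) * hdet
        rw [this]; nlinarith
      · have : idet3 a b (b.1 + v.1 + w1, b.2 + v.2 + w2) = (q - p) * sgn σ := by
          simp only [idet3]; rw [ea1, ea2]
          linear_combination (q - p) * hdet
        rw [this]; nlinarith
    have hg1 : (g : ℤ) = 1 := by
      by_contra hcon2
      have : (2 : ℤ) ≤ g := by omega
      nlinarith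
    have hp1 : p = 0 ∨ p = 1 := by
      rw [hg1] at hin; omega
    rcases hp1 with hp | hp
    · have := hm1 q (w1, w2) (Prod.ext (by simp [pt, ea1, hp]) (by simp [pt, ea2, hp]))
      omega
    · have := hm2 q (w1, w2) (Prod.ext (by simp [ec, pt, ea1, hp, hg1])
        (by simp [ec, pt, ea2, hp, hg1]))
      omega
  obtain ⟨a0, i, h0, h0', hi⟩ := line_start hpos hb
  obtain ⟨n, hn⟩ := line_len hpos h0
  have hS := hG.hor v a0 hcop hpos h0 h0' n hn
  have ec' : c = pt a0 v (i + g : ℕ) := by rw [ec, hi, pt_pt]; push_cast; rfl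
  obtain ⟨t, ht, hres⟩ := hS.vis σ i (i + g) (by omega) ((hn _).1 (ec' ▸ hc)) (by
    intro j hij hjl hs
    have hd : inBox r (pt a0 v j) := inBox.btw (i := i) (j := (i + g : ℕ)) (hi ▸ hb) (ec' ▸ hc)
      (by omega) (by omega)
    rw [← hi, ← ec'] at hs
    have hij' : (0 : ℤ) < j - i := by omega
    have hjl' : (0 : ℤ) < i + g - j := by omega
    have ei1 : b.1 = a0.1 + i * v.1 := by rw [hi]; rfl
    have ei2 : b.2 = a0.2 + i * v.2 := by rw [hi]; rfl
    have ec1 : c.1 = a0.1 + (i + g) * v.1 := by rw [ec']; simp [pt]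
    have ec2 : c.2 = a0.2 + (i + g) * v.2 := by rw [ec']; simp [pt]
    rw [ei1, ei2] at hh
    refine hemp _ hd (inTri_of_spos hs (hG.sp hc ha hd ?_) (hG.sp ha hb hd ?_))
    · have : idet3 c a (pt a0 v j) = (i + g - j) * h := by
        simp only [idet3, pt]; rw [ec1, ec2]; linear_combination (i + g - j : ℤ) * hh
      rw [this]; nlinarith [mul_pos hjl' hσ]
    · have : idet3 a b (pt a0 v j) = (j - i) * h := by
        simp only [idet3, pt]; rw [ei1, ei2]; linear_combination (j - i : ℤ) * hh
      rw [this]; nlinarith [mul_pos hij' hσ])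
  refine ⟨v, t, 0, h, σ, a0, i, hcop, hpos, ha, hb, hc, h0, h0', hi, ?_, hh, hbound, hσ.le,
    by simpa using hres, fun h0 => absurd h0 hne, fun _ => rfl, ?_⟩
  · rw [ec', add_zero, ht]
  · intro x y hxy _ _ hx hy
    refine hG.sp hx hy ha ?_
    have ei1 : b.1 = a0.1 + i * v.1 := by rw [hi]; rfl
    have ei2 : b.2 = a0.2 + i * v.2 := by rw [hi]; rfl
    rw [ei1, ei2] at hh
    have : idet3 (pt a0 v x) (pt a0 v y) a = (y - x) * h := by
      simp only [idet3, pt]; linear_combination (y - x : ℤ) * hh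
    rw [this]
    have hxy' : (0 : ℤ) < y - x := by omega
    nlinarith [mul_pos hxy' hσ]

theorem frame_ndeg1 {r : ℕ} {R : ℤ × ℤ → ℝ × ℝ} (hG : Good r R) {a b c : ℤ × ℤ}
    (ha : inBox r a) (hb : inBox r b) (hc : inBox r c) (hab : a ≠ b) (hac : a ≠ c) (hbc : b ≠ c)
    (hcol : idet3 a b c ≠ 0)
    (hg1 : Int.gcd (a.1 - b.1) (a.2 - b.2) ≤ Int.gcd (c.1 - b.1) (c.2 - b.2))
    (hg2 : Int.gcd (a.1 - c.1) (a.2 - c.2) ≤ Int.gcd (c.1 - b.1) (c.2 - b.2))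
    (hemp : ∀ d, inBox r d → ¬ inTri (R a) (R b) (R c) (R d)) : Fr r R a b c ∨ Fr r R a c b := by
  have key : ∀ (x : ℤ × ℤ) (n : ℤ) w, a ≠ x → a = pt x w n →
      n ≤ Int.gcd (a.1 - x.1) (a.2 - x.2) := by
    intro x n w hx h
    apply Int.le_of_dvd
    · have : 0 < Int.gcd (a.1 - x.1) (a.2 - x.2) := by
        rw [Int.gcd_pos_iff]
        by_contra hcon
        push Not at hcon
        exact hx (Prod.ext (by omega) (by omega))
      exact_mod_cast this
    · rw [h]; simp only [pt]
      exact Int.dvd_coe_gcd ⟨w.1, by ring⟩ ⟨w.2, by ring⟩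
  obtain ⟨v, g, hcop, hpos, hc', hg, hgg⟩ := prim_dir hbc
  have ec1 : c.1 = b.1 + g * v.1 := by rw [hc']; rfl
  have ec2 : c.2 = b.2 + g * v.2 := by rw [hc']; rfl
  have hdb : v.1 * (a.2 - b.2) - v.2 * (a.1 - b.1) ≠ 0 := by
    intro h; apply hcol; simp only [idet3]; rw [ec1, ec2]; linear_combination g * h
  rcases lt_or_gt_of_ne hg with hg0 | hg0
  · right
    rw [abs_of_neg hg0] at hgg
    refine frame_ndeg0 hG (v := v) (g := (-g).toNat) ha hc hb hcop hpos (by omega) ?_ ?_ ?_ ?_ ?_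
    · rw [hc', pt_pt, Int.toNat_of_nonneg (by omega)]; simp [pt_zero]
    · intro h; apply hdb; rw [ec1, ec2] at h; linear_combination h
    · intro n w h; have := key c n w hac h; omega
    · intro n w h; have := key b n w hab h; omega
    · intro d hd h; exact hemp d hd (by unfold inTri posTri at *; tauto)
  · left
    rw [abs_of_pos hg0] at hgg
    refine frame_ndeg0 hG (v := v) (g := g.toNat) ha hb hc hcop hpos (by omega) ?_ ?_ ?_ ?_ ?_
    · rw [hc', Int.toNat_of_nonneg (by omega)]
    · exact hdb
    · intro n w h; have := key b n w hab h; omega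
    · intro n w h; have := key c n w hac h; omega
    · intro d hd h; exact hemp d hd (by unfold inTri posTri at *; tauto)

theorem gcd_sub_symm (a b : ℤ × ℤ) :
    Int.gcd (a.1 - b.1) (a.2 - b.2) = Int.gcd (b.1 - a.1) (b.2 - a.2) := by
  rw [← neg_sub b.1, ← neg_sub b.2, Int.gcd_neg, Int.neg_gcd]

theorem frame_all {r : ℕ} {R : ℤ × ℤ → ℝ × ℝ} (hG : Good r R) {a b c : ℤ × ℤ}
    (ha : inBox r a) (hb : inBox r b) (hc : inBox r c) (hab : a ≠ b) (hac : a ≠ c) (hbc : b ≠ c)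
    (hemp : ∀ d, inBox r d → ¬ inTri (R a) (R b) (R c) (R d)) : Sym3 (Fr r R) a b c := by
  by_cases hcol : idet3 a b c = 0
  · exact frame_deg hG ha hb hc hab hac hbc hcol hemp
  have e1 := gcd_sub_symm a b
  have e2 := gcd_sub_symm b c
  have e3 := gcd_sub_symm a c
  have c1 : idet3 b c a ≠ 0 := by
    intro h; apply hcol; rw [← h]; simp only [idet3]; ring
  have c2 : idet3 c a b ≠ 0 := by
    intro h; apply hcol; rw [← h]; simp only [idet3]; ring
  have h3 : (Fr r R a b c ∨ Fr r R a c b) ∨ (Fr r R b c a ∨ Fr r R b a c) ∨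
      (Fr r R c a b ∨ Fr r R c b a) := by
    set g1 := Int.gcd (a.1 - b.1) (a.2 - b.2)
    set g2 := Int.gcd (b.1 - c.1) (b.2 - c.2)
    set g3 := Int.gcd (a.1 - c.1) (a.2 - c.2)
    by_cases k1 : g1 ≤ g2 ∧ g3 ≤ g2
    · left; exact frame_ndeg1 hG ha hb hc hab hac hbc hcol (by omega) (by omega) hemp
    · by_cases k2 : g1 ≤ g3 ∧ g2 ≤ g3
      · right; left
        exact frame_ndeg1 hG hb hc ha hbc hab.symm hac.symm c1 (by omega) (by omega)
          (fun d hd h => hemp d hd (inTri_rot (inTri_rot h)))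
      · right; right
        exact frame_ndeg1 hG hc ha hb hac.symm hbc.symm hab c2 (by omega) (by omega)
          (fun d hd h => hemp d hd (inTri_rot h))
  unfold Sym3; tauto

/-- the sup norm of an integer vector -/
def vM (v : ℤ × ℤ) : ℕ := max v.1.natAbs v.2.natAbs

def ldet (v z : ℤ × ℤ) : ℤ := v.1 * z.2 - v.2 * z.1

theorem line_card {r : ℕ} {v : ℤ × ℤ} (hcop : IsCoprime v.1 v.2) (hpos : posv v)
    (hr : vM v ≤ r) (c : ℤ) (Z : Finset (ℤ × ℤ)) (hZ : ∀ z ∈ Z, inBox r z ∧ ldet v z = c) :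
    vM v * Z.card ≤ 2 * r := by
  have hM : 0 < vM v := by
    unfold vM
    rcases hpos with h | h
    · have : 0 < v.1.natAbs := by omega
      exact lt_max_of_lt_left this
    · have : 0 < v.2.natAbs := by omega
      exact lt_max_of_lt_right this
  have hpar : ∀ z ∈ Z, ∀ z' ∈ Z, ∃ n, z' = pt z v n := by
    intro z hz z' hz'
    apply par_pt hcop
    have h1 := (hZ z hz).2
    have h2 := (hZ z' hz').2
    unfold ldet at *
    linarith
  have hcard : Z.card ≤ r / vM v + 1 := by
    have main : ∀ φ : ℤ × ℤ → ℤ, (∀ z, inBox r z → 1 ≤ φ z ∧ φ z ≤ r) →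
        (∀ z n, φ (pt z v n) = φ z + n * φ v) → (φ v).natAbs = vM v → Z.card ≤ r / vM v + 1 := by
      intro φ h1 h2 h3
      have : Z.card ≤ (Finset.range (r / vM v + 1)).card := by
        refine Finset.card_le_card_of_injOn (fun z => ((φ z).toNat / vM v)) ?_ ?_
        · intro z hz
          have := h1 z (hZ z hz).1
          simp only [Finset.coe_range, Set.mem_Iio]
          have : (φ z).toNat / vM v ≤ r / vM v := Nat.div_le_div_right (by omega)
          omega
        · intro z hz z' hz' he
          obtain ⟨n, hn⟩ := hpar z hz z' hz'
          have b1 := h1 z (hZ z hz).1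
          have b2 := h1 z' (hZ z' hz').1
          have e1 : φ z' = φ z + n * φ v := by rw [hn, h2]
          simp only at he
          have m1 := Nat.div_add_mod (φ z).toNat (vM v)
          have m2 := Nat.div_add_mod (φ z').toNat (vM v)
          have l1 := Nat.mod_lt (φ z).toNat hM
          have l2 := Nat.mod_lt (φ z').toNat hM
          rw [he] at m1
          have : (n * φ v).natAbs < vM v := by
            have : n * φ v = φ z' - φ z := by linarith
            rw [this]; omega
          rw [Int.natAbs_mul, h3] at this
          have hn0 : n.natAbs = 0 := by
            by_contra hcon
            have : 1 ≤ n.natAbs := by omega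
            nlinarith
          have : n = 0 := by omega
          rw [hn, this, pt_zero]
      simpa using this
    rcases max_choice v.1.natAbs v.2.natAbs with h | h
    · exact main (fun z => z.1) (fun z hz => ⟨hz.1, hz.2.1⟩) (fun z n => rfl) (by unfold vM; omega)
    · exact main (fun z => z.2) (fun z hz => ⟨hz.2.2.1, hz.2.2.2⟩) (fun z n => rfl)
        (by unfold vM; omega)
  have := Nat.mul_div_le r (vM v)
  nlinarith

theorem lines_card {r : ℕ} {v : ℤ × ℤ} (hcop : IsCoprime v.1 v.2) (hpos : posv v)
    (hr : vM v ≤ r) (c : ℤ) (Z : Finset (ℤ × ℤ)) (hZ : ∀ z ∈ Z, inBox r z ∧ |ldet v z - c| ≤ 2) :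
    vM v * Z.card ≤ 10 * r := by
  have h1 : Z ⊆ (Finset.Icc (c - 2) (c + 2)).biUnion (fun c' => Z.filter (fun z => ldet v z = c')) := by
    intro z hz
    have := (abs_le.1 (hZ z hz).2)
    simp only [Finset.mem_biUnion, Finset.mem_Icc, Finset.mem_filter]
    exact ⟨ldet v z, by omega, hz, rfl⟩
  have h2 := (Finset.card_le_card h1).trans Finset.card_biUnion_le
  calc vM v * Z.card ≤ vM v * ∑ c' ∈ Finset.Icc (c - 2) (c + 2), (Z.filter (fun z => ldet v z = c')).card :=
        Nat.mul_le_mul_left _ h2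
    _ = ∑ c' ∈ Finset.Icc (c - 2) (c + 2), vM v * (Z.filter (fun z => ldet v z = c')).card :=
        Finset.mul_sum _ _ _
    _ ≤ ∑ c' ∈ Finset.Icc (c - 2) (c + 2), 2 * r := by
        apply Finset.sum_le_sum
        intro c' _
        apply line_card hcop hpos hr c'
        intro z hz
        rw [Finset.mem_filter] at hz
        exact ⟨(hZ z hz.1).1, hz.2⟩
    _ = 10 * r := by
        rw [Finset.sum_const, Int.card_Icc]
        have : (c + 2 + 1 - (c - 2)).toNat = 5 := by omega
        rw [this]; simp; ring

theorem shell (ρ : ℕ) (V : Finset (ℤ × ℤ)) (hV : ∀ v ∈ V, 1 ≤ vM v ∧ vM v ≤ ρ) :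
    ∑ v ∈ V, (1 : ℝ) / vM v ≤ 12 * ρ := by
  rw [← Finset.sum_fiberwise_of_maps_to (t := Finset.Icc 1 ρ) (g := vM)
    (fun v hv => Finset.mem_Icc.2 (hV v hv))]
  calc _ ≤ ∑ j ∈ Finset.Icc 1 ρ, (12 : ℝ) := by
        apply Finset.sum_le_sum
        intro j hj
        have hj1 := (Finset.mem_Icc.1 hj).1
        have hj0 : (0 : ℝ) < j := by exact_mod_cast hj1
        have : ∑ v ∈ V with vM v = j, (1 : ℝ) / vM v = ∑ v ∈ V with vM v = j, (1 : ℝ) / j := by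
          apply Finset.sum_congr rfl
          intro v hv
          rw [(Finset.mem_filter.1 hv).2]
        rw [this, Finset.sum_const, nsmul_eq_mul, mul_one_div, div_le_iff₀ hj0]
        have hsub : (V.filter fun v => vM v = j) ⊆
            (({(j : ℤ), -(j : ℤ)} : Finset ℤ) ×ˢ Finset.Icc (-(j : ℤ)) j) ∪
            (Finset.Icc (-(j : ℤ)) j ×ˢ ({(j : ℤ), -(j : ℤ)} : Finset ℤ)) := by
          intro v hv
          have h := (Finset.mem_filter.1 hv).2
          simp only [Finset.mem_union, Finset.mem_product, Finset.mem_insert, Finset.mem_singleton,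
            Finset.mem_Icc]
          unfold vM at h
          rcases max_choice v.1.natAbs v.2.natAbs with h' | h'
          · left; have := le_max_right v.1.natAbs v.2.natAbs; omega
          · right; have := le_max_left v.1.natAbs v.2.natAbs; omega
        have h2 : (({(j : ℤ), -(j : ℤ)} : Finset ℤ)).card ≤ 2 := Finset.card_le_two
        have h3 := (Finset.card_le_card hsub).trans (Finset.card_union_le _ _)
        rw [Finset.card_product, Finset.card_product, Int.card_Icc] at h3
        have h4 : ((j : ℤ) + 1 - -(j : ℤ)).toNat = 2 * j + 1 := by omega
        rw [h4] at h3
        have : (V.filter fun v => vM v = j).card ≤ 12 * j := by nlinarith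
        exact_mod_cast this
    _ = 12 * ρ := by simp; ring

theorem vM_gap {r : ℕ} {R : ℤ × ℤ → ℝ × ℝ} {v t u h σ a0 i a b c}
    (hf : GFr r R v t u h σ a0 i a b c) : 2 ^ (t + u) * vM v ≤ r ∧ 1 ≤ vM v := by
  obtain ⟨b1, b2, b3, b4⟩ := hf.hb
  obtain ⟨c1, c2, c3, c4⟩ := hf.hc
  have e1 : c.1 = b.1 + 2 ^ (t + u) * v.1 := by
    rw [hf.ec, hf.eb]; simp only [pt]; push_cast; ring
  have e2 : c.2 = b.2 + 2 ^ (t + u) * v.2 := by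
    rw [hf.ec, hf.eb]; simp only [pt]; push_cast; ring
  constructor
  · have k1 : ((2 : ℤ) ^ (t + u) * v.1).natAbs = 2 ^ (t + u) * v.1.natAbs := by
      rw [Int.natAbs_mul, Int.natAbs_pow]; rfl
    have k2 : ((2 : ℤ) ^ (t + u) * v.2).natAbs = 2 ^ (t + u) * v.2.natAbs := by
      rw [Int.natAbs_mul, Int.natAbs_pow]; rfl
    unfold vM
    rcases max_choice v.1.natAbs v.2.natAbs with h' | h' <;> rw [h']
    · rw [← k1]; omega
    · rw [← k2]; omega
  · unfold vM
    rcases hf.pos with h | h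
    · have : 0 < v.1.natAbs := by omega
      exact lt_max_of_lt_left this
    · have : 0 < v.2.natAbs := by omega
      exact lt_max_of_lt_right this

abbrev Tr := (ℤ × ℤ) × (ℤ × ℤ) × (ℤ × ℤ)

theorem geo_sum (r : ℕ) : ∑ t ∈ Finset.range r, (1 : ℝ) / 2 ^ t ≤ 2 := by
  have := sum_geometric_two_le r
  simpa using this

theorem count_total {r : ℕ} {R : ℤ × ℤ → ℝ × ℝ} (X : Finset Tr)
    (hX : ∀ T ∈ X, Fr r R T.1 T.2.1 T.2.2)
    (hkey : ∀ v t u h σ, ∀ Y ⊆ X, (∀ T ∈ Y, ∃ a0 i, GFr r R v t u h σ a0 i T.1 T.2.1 T.2.2) →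
      ∃ (x : Tr → ℤ × ℤ) (c0 : ℤ), Set.InjOn x (Y : Set Tr) ∧
        ∀ T ∈ Y, inBox r (x T) ∧ |ldet v (x T) - c0| ≤ 2) :
    (X.card : ℝ) ≤ 4800 * (r : ℝ) ^ 2 := by
  set K := fun (v : ℤ × ℤ) (t u : ℕ) (h : ℤ) (σ : Bool) =>
    X.filter (fun T => ∃ a0 i, GFr r R v t u h σ a0 i T.1 T.2.1 T.2.2) with hK
  set B : Finset (ℤ × ℤ) := Finset.Icc (-(r : ℤ)) r ×ˢ Finset.Icc (-(r : ℤ)) r with hB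
  set V := fun (t u : ℕ) => B.filter (fun v => 1 ≤ vM v ∧ vM v ≤ r / 2 ^ (t + u)) with hV
  have hsub : X ⊆ (Finset.range r).biUnion fun t => (Finset.range r).biUnion fun u =>
      (Finset.Icc (-2 : ℤ) 2).biUnion fun h => (Finset.univ : Finset Bool).biUnion fun σ =>
      (V t u).biUnion fun v => K v t u h σ := by
    intro T hT
    obtain ⟨v, t, u, h, σ, a0, i, hf⟩ := hX T hT
    obtain ⟨g1, g2⟩ := vM_gap hf
    have g3 : 2 ^ (t + u) ≤ r := by nlinarith [Nat.pos_of_ne_zero (pow_ne_zero (t + u) (two_ne_zero (α := ℕ)))]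
    have g4 : t + u < 2 ^ (t + u) := Nat.lt_two_pow_self
    have g5 : vM v ≤ r / 2 ^ (t + u) := by
      rw [Nat.le_div_iff_mul_le (by positivity)]; linarith
    have g6 : vM v ≤ r := g5.trans (Nat.div_le_self _ _)
    have g7 : v.1.natAbs ≤ r := (le_max_left _ _).trans g6
    have g8 : v.2.natAbs ≤ r := (le_max_right _ _).trans g6
    simp only [Finset.mem_biUnion, Finset.mem_range, Finset.mem_Icc, Finset.mem_univ, true_and]
    refine ⟨t, by omega, u, by omega, h, abs_le.1 hf.h2, σ, v, ?_, ?_⟩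
    · rw [hV, Finset.mem_filter, hB, Finset.mem_product, Finset.mem_Icc, Finset.mem_Icc]
      exact ⟨by omega, g2, g5⟩
    · rw [hK, Finset.mem_filter]; exact ⟨hT, a0, i, hf⟩
  have hcardK : ∀ t u h σ, ∀ v ∈ V t u, ((K v t u h σ).card : ℝ) ≤ 10 * r * (1 / vM v) := by
    intro t u h σ v hv
    rw [hV, Finset.mem_filter] at hv
    have hM : (0 : ℝ) < vM v := by exact_mod_cast hv.2.1
    rw [mul_one_div, le_div_iff₀ hM]
    rcases (K v t u h σ).eq_empty_or_nonempty with he | ⟨T, hT⟩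
    · rw [he]; simp
    obtain ⟨x, c0, hinj, hx⟩ := hkey v t u h σ (K v t u h σ) (Finset.filter_subset _ _)
      (fun T hT => (Finset.mem_filter.1 hT).2)
    obtain ⟨a0, i, hf⟩ := (Finset.mem_filter.1 hT).2
    have hr : vM v ≤ r := hv.2.2.trans (Nat.div_le_self _ _)
    have := lines_card hf.cop hf.pos hr c0 ((K v t u h σ).image x) (by
      intro z hz
      obtain ⟨T, hT, rfl⟩ := Finset.mem_image.1 hz
      exact hx T hT)
    rw [Finset.card_image_of_injOn hinj] at this
    rw [mul_comm]
    exact_mod_cast this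
  have hsum : ∀ t u h σ, ∑ v ∈ V t u, ((K v t u h σ).card : ℝ) ≤
      120 * (r : ℝ) ^ 2 * ((1 / 2 ^ t) * (1 / 2 ^ u)) := by
    intro t u h σ
    have h1 := shell (r / 2 ^ (t + u)) (V t u) (fun v hv => (Finset.mem_filter.1 hv).2)
    have h2 : ((r / 2 ^ (t + u) : ℕ) : ℝ) ≤ r * ((1 / 2 ^ t) * (1 / 2 ^ u)) := by
      refine Nat.cast_div_le.trans (le_of_eq ?_)
      push_cast; rw [pow_add]; field_simp
    calc _ ≤ ∑ v ∈ V t u, 10 * (r : ℝ) * (1 / vM v) := Finset.sum_le_sum (hcardK t u h σ)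
      _ = 10 * r * ∑ v ∈ V t u, (1 : ℝ) / vM v := by rw [Finset.mul_sum]
      _ ≤ 10 * r * (12 * (r * ((1 / 2 ^ t) * (1 / 2 ^ u)))) := by
        apply mul_le_mul_of_nonneg_left _ (by positivity); linarith
      _ = _ := by ring
  have h0 : (X.card : ℝ) ≤ ∑ t ∈ Finset.range r, ∑ u ∈ Finset.range r, ∑ h ∈ Finset.Icc (-2 : ℤ) 2,
      ∑ σ : Bool, ∑ v ∈ V t u, ((K v t u h σ).card : ℝ) := by
    have : X.card ≤ ∑ t ∈ Finset.range r, ∑ u ∈ Finset.range r, ∑ h ∈ Finset.Icc (-2 : ℤ) 2,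
      ∑ σ : Bool, ∑ v ∈ V t u, (K v t u h σ).card := by
      refine (Finset.card_le_card hsub).trans ?_
      refine Finset.card_biUnion_le.trans (Finset.sum_le_sum fun t _ => ?_)
      refine Finset.card_biUnion_le.trans (Finset.sum_le_sum fun u _ => ?_)
      refine Finset.card_biUnion_le.trans (Finset.sum_le_sum fun h _ => ?_)
      refine Finset.card_biUnion_le.trans (Finset.sum_le_sum fun σ _ => ?_)
      exact Finset.card_biUnion_le
    exact_mod_cast this
  calc (X.card : ℝ) ≤ _ := h0
    _ ≤ ∑ t ∈ Finset.range r, ∑ u ∈ Finset.range r, ∑ h ∈ Finset.Icc (-2 : ℤ) 2,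
      ∑ σ : Bool, 120 * (r : ℝ) ^ 2 * ((1 / 2 ^ t) * (1 / 2 ^ u)) := by
        refine Finset.sum_le_sum fun t _ => Finset.sum_le_sum fun u _ => Finset.sum_le_sum fun h _ =>
          Finset.sum_le_sum fun σ _ => hsum t u h σ
    _ = 1200 * (r : ℝ) ^ 2 * ((∑ t ∈ Finset.range r, (1 : ℝ) / 2 ^ t) *
          ∑ u ∈ Finset.range r, (1 : ℝ) / 2 ^ u) := by
        rw [Finset.sum_mul_sum, Finset.mul_sum]
        refine Finset.sum_congr rfl fun t _ => ?_
        rw [Finset.mul_sum]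
        refine Finset.sum_congr rfl fun u _ => ?_
        simp only [Finset.sum_const, Int.card_Icc, Finset.card_univ, Fintype.card_bool, nsmul_eq_mul]
        rw [show ((2:ℤ) + 1 - -2).toNat = 5 from rfl]
        norm_num
        ring
    _ ≤ 1200 * (r : ℝ) ^ 2 * (2 * 2) := by
        apply mul_le_mul_of_nonneg_left _ (by positivity)
        have h1 := geo_sum r
        have h2 : (0 : ℝ) ≤ ∑ t ∈ Finset.range r, (1 : ℝ) / 2 ^ t :=
          Finset.sum_nonneg fun _ _ => by positivity
        exact mul_le_mul h1 h1 h2 (by norm_num)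
    _ = _ := by ring


theorem tri_sign {a b c s : ℝ × ℝ} {σ : Bool} (h : inTri a b c s) (hσ : spos σ (orient b c a)) :
    spos σ (orient a b s) ∧ spos σ (orient b c s) ∧ spos σ (orient c a s) := by
  have e : orient a b s + orient b c s + orient c a s = orient b c a := by
    simp only [orient]; ring
  have f1 := orient_swap a b s
  have f2 := orient_swap b c s
  have f3 := orient_swap c a s
  cases σ <;> simp only [spos] at * <;> rcases h with ⟨h1, h2, h3⟩ | ⟨h1, h2, h3⟩ <;>
    first
    | (exfalso; linarith)
    | (refine ⟨?_, ?_, ?_⟩ <;> linarith)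

theorem hull_id (a b c s p q : ℝ × ℝ) :
    orient p q s * (orient a b s + orient b c s + orient c a s) =
      orient b c s * orient p q a + orient c a s * orient p q b + orient a b s * orient p q c := by
  simp only [orient]; ring

theorem hull_sign_pos {a b c s p q : ℝ × ℝ} {σ : Bool} (h : posTri a b c s)
    (ha : spos σ (orient p q a)) (hb : spos σ (orient p q b)) (hc : spos σ (orient p q c)) :
    spos σ (orient p q s) := by
  obtain ⟨h1, h2, h3⟩ := h
  have e := hull_id a b c s p q
  cases σ <;> simp only [spos] at *
  · by_contra hcon
    push Not at hcon
    have := mul_nonneg hcon (show 0 ≤ orient a b s + orient b c s + orient c a s by linarith)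
    nlinarith [mul_pos h1 (neg_pos.2 hc), mul_pos h2 (neg_pos.2 ha), mul_pos h3 (neg_pos.2 hb)]
  · by_contra hcon
    push Not at hcon
    have := mul_nonneg (neg_nonneg.2 hcon)
      (show 0 ≤ orient a b s + orient b c s + orient c a s by linarith)
    nlinarith [mul_pos h1 hc, mul_pos h2 ha, mul_pos h3 hb]

theorem hull_sign {a b c s p q : ℝ × ℝ} {σ : Bool} (h : inTri a b c s)
    (ha : spos σ (orient p q a)) (hb : spos σ (orient p q b)) (hc : spos σ (orient p q c)) :
    spos σ (orient p q s) := by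
  rcases h with h | h
  · exact hull_sign_pos h ha hb hc
  · exact hull_sign_pos h ha hc hb

theorem fan_id (a b c b' s : ℝ × ℝ) : orient a b' s * orient b c a =
    orient c a s * -orient b b' a + orient a b s * -orient c b' a := by
  simp only [orient]; ring

theorem fan {a b c b' c' s : ℝ × ℝ} {σ : Bool} (h : inTri a b c s) (h' : inTri a b' c' s)
    (h1 : spos σ (orient b c a)) (h2 : spos σ (orient b b' a)) (h3 : spos σ (orient b' c' a))
    (h4 : c = b' ∨ spos σ (orient c b' a)) : False := by
  obtain ⟨p1, p2, p3⟩ := tri_sign h h1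
  obtain ⟨q1, -, -⟩ := tri_sign h' h3
  have e := fan_id a b c b' s
  have h5 : c = b' → orient c b' a = 0 := by rintro rfl; simp [orient]
  cases σ <;> simp only [spos] at *
  · have h6 : orient c b' a ≤ 0 := by rcases h4 with h | h; · exact (h5 h).le
                                      · exact h.le
    nlinarith [mul_pos_of_neg_of_neg q1 h1, mul_pos_of_neg_of_neg p3 h2,
      mul_nonneg_of_nonpos_of_nonpos p1.le h6]
  · have h6 : 0 ≤ orient c b' a := by rcases h4 with h | h; · exact (h5 h).ge
                                      · exact h.le
    nlinarith [mul_pos q1 h1, mul_pos p3 h2, mul_nonneg p1.le h6]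

theorem res_eq {σ : Bool} {t u i i' : ℕ} (hm : i % 2 ^ u = i' % 2 ^ u) (h : sres σ t (i / 2 ^ u))
    (h' : sres σ t (i' / 2 ^ u)) (hlt : i < i') : i + 2 ^ (t + u) ≤ i' := by
  have e := Nat.div_add_mod i (2 ^ u)
  have e' := Nat.div_add_mod i' (2 ^ u)
  set k := i / 2 ^ u
  set k' := i' / 2 ^ u
  have hk : k < k' := by
    by_contra hcon
    push Not at hcon
    have := Nat.mul_le_mul_left (2 ^ u) hcon
    omega
  have hd : k + 2 ^ t ≤ k' := by
    have : 2 ^ t ∣ k' - k := by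
      cases σ <;> simp only [sres] at *
      · exact Nat.dvd_sub (Nat.dvd_of_mod_eq_zero h') (Nat.dvd_of_mod_eq_zero h)
      · have := Nat.dvd_sub (Nat.dvd_of_mod_eq_zero h') (Nat.dvd_of_mod_eq_zero h)
        rwa [Nat.add_sub_add_right] at this
    have := Nat.le_of_dvd (by omega) this
    omega
  have := Nat.mul_le_mul_left (2 ^ u) hd
  rw [mul_add, ← pow_add, add_comm u t] at this
  omega

section
variable {r : ℕ} {R : ℤ × ℤ → ℝ × ℝ} {v : ℤ × ℤ} {t u : ℕ} {h : ℤ} {σ : Bool}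
  {a0 a0' : ℤ × ℤ} {i i' : ℕ} {a b c a' b' c' : ℤ × ℤ}

theorem ldet_pt (v a : ℤ × ℤ) (n : ℤ) : ldet v (pt a v n) = ldet v a := by
  simp only [ldet, pt]; ring

theorem GFr.la (hf : GFr r R v t u h σ a0 i a b c) : ldet v a = ldet v b + h := by
  have := hf.hh; simp only [ldet]; linarith

theorem GFr.lb (hf : GFr r R v t u h σ a0 i a b c) : ldet v b = ldet v a0 := by
  rw [hf.eb, ldet_pt]

theorem GFr.cb (hf : GFr r R v t u h σ a0 i a b c) : c = pt b v ((2 ^ (t + u) : ℕ) : ℤ) := by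
  rw [hf.ec, hf.eb, pt_pt]; push_cast; rfl

theorem GFr.bc (hf : GFr r R v t u h σ a0 i a b c) : b = pt c v (-((2 ^ (t + u) : ℕ) : ℤ)) := by
  rw [hf.cb, pt_pt]; simp [pt_zero]

theorem GFr.same (hf : GFr r R v t u h σ a0 i a b c) (hf' : GFr r R v t u h σ a0' i' a b' c') :
    a0 = a0' := by
  have e : ldet v a0 = ldet v a0' := by
    have := hf.la; have := hf'.la; have := hf.lb; have := hf'.lb; omega
  obtain ⟨n, hn⟩ := par_pt hf.cop (a := a0) (b := a0') (by simp only [ldet] at e; linarith)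
  exact start_uniq hf.h0 hf.h0' hf'.h0 hf'.h0' hn

theorem GFr.same_mod (hf : GFr r R v t u h σ a0 i a b c) (hf' : GFr r R v t u h σ a0 i' a b' c') :
    i % 2 ^ u = i' % 2 ^ u := by
  by_cases h0 : h = 0
  · obtain ⟨u1, α, e1, e2, e3⟩ := hf.deg h0
    obtain ⟨u2, α2, e4, e5, e6⟩ := hf'.deg h0
    have hu : u2 = u1 := by omega
    have hα : α2 = α := by exact_mod_cast pt_inj hf.pos (e5.symm.trans e2)
    rw [hu, hα, ← e3] at e6
    exact (Nat.ModEq.add_right_cancel' _ (show _ ≡ _ [MOD 2 ^ u] from e6)).symm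
  · rw [hf.ndeg h0]; simp [Nat.mod_one]

theorem GFr.bcpos (hf : GFr r R v t u h σ a0 i a b c) : spos σ (orient (R b) (R c) (R a)) := by
  have hb := hf.hb
  have hc := hf.hc
  rw [hf.eb] at hb ⊢
  rw [hf.ec] at hc ⊢
  refine hf.ori i (i + 2 ^ (t + u)) (Nat.lt_add_of_pos_right (by positivity)) rfl ?_ hb hc
  rw [pow_add, mul_comm, Nat.add_mul_mod_self_left]

theorem GFr.fan_lt (hf : GFr r R v t u h σ a0 i a b c) (hf' : GFr r R v t u h σ a0 i' a b' c')
    {s : ℝ × ℝ} (hs : inTri (R a) (R b) (R c) s) (hs' : inTri (R a) (R b') (R c') s)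
    (hlt : i < i') : False := by
  have hm := hf.same_mod hf'
  have hle := res_eq hm hf.res hf'.res hlt
  have hb := hf.hb
  have hc := hf.hc
  have hb' := hf'.hb
  refine fan hs hs' hf.bcpos ?_ hf'.bcpos ?_
  · rw [hf.eb] at hb ⊢
    rw [hf'.eb] at hb' ⊢
    exact hf.ori i i' hlt rfl hm.symm hb hb'
  · rcases hle.eq_or_lt with hE | hE
    · left; rw [hf.ec, hf'.eb, hE]
    · right
      rw [hf.ec] at hc ⊢
      rw [hf'.eb] at hb' ⊢
      refine hf.ori _ i' hE ?_ hm.symm hc hb'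
      rw [pow_add, mul_comm, Nat.add_mul_mod_self_left]

theorem GFr.near (hG : Good r R) (hf : GFr r R v t u h σ a0 i a b c)
    (hf' : GFr r R v t u h σ a0' i' a' b' c')
    {s : ℝ × ℝ} (hs : inTri (R a) (R b) (R c) s) (hs' : inTri (R a') (R b') (R c') s) :
    sgn σ * (ldet v b' - ldet v b) ≤ 2 := by
  by_contra hcon
  push Not at hcon
  obtain ⟨-, q2, -⟩ := tri_sign hs' hf'.bcpos
  have hid : ∀ x : ℤ × ℤ, idet3 b' c' x = (2 ^ (t + u) : ℕ) * (ldet v x - ldet v b') := by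
    intro x; rw [hf'.cb]; simp only [idet3, pt, ldet]; ring
  have h2 := abs_le.1 hf.h2
  have hσ := hf.hσ
  have ha := hf.la
  have hc : ldet v c = ldet v b := by rw [hf.cb, ldet_pt]
  have key : ∀ x, inBox r x → 0 < sgn (!σ) * (ldet v x - ldet v b') →
      spos (!σ) (orient (R b') (R c') (R x)) := by
    intro x hx hp
    refine hG.sp hf'.hb hf'.hc hx ?_
    rw [hid x]
    have : (0 : ℤ) < (2 ^ (t + u) : ℕ) := by positivity
    nlinarith [mul_pos this hp]
  have fin : spos (!σ) (orient (R b') (R c') s) := by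
    refine hull_sign hs (key a hf.ha ?_) (key b hf.hb ?_) (key c hf.hc ?_)
    all_goals cases σ <;> simp only [sgn, Bool.not_true, Bool.not_false] at * <;> omega
  cases σ <;> simp only [spos, Bool.not_true, Bool.not_false] at * <;> linarith

end

theorem count_S {r : ℕ} {R : ℤ × ℤ → ℝ × ℝ} (hG : Good r R) (s : ℝ × ℝ) (X : Finset Tr)
    (hX : ∀ T ∈ X, Fr r R T.1 T.2.1 T.2.2)
    (hs : ∀ T ∈ X, inTri (R T.1) (R T.2.1) (R T.2.2) s) : (X.card : ℝ) ≤ 4800 * (r : ℝ) ^ 2 := by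
  refine count_total X hX fun v t u h σ Y hY hF => ?_
  rcases Y.eq_empty_or_nonempty with rfl | ⟨T0, hT0⟩
  · exact ⟨fun _ => 0, 0, by simp, by simp⟩
  refine ⟨fun T => T.1, ldet v T0.1, ?_, ?_⟩
  · intro T hT T' hT' e
    obtain ⟨a0, i, hf⟩ := hF T hT
    obtain ⟨a0', i', hf'⟩ := hF T' hT'
    have hs1 := hs T (hY hT)
    have hs2 := hs T' (hY hT')
    dsimp only at e
    rw [← e] at hf' hs2
    obtain rfl := hf.same hf'
    rcases lt_trichotomy i i' with hl | hl | hl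
    · exact (hf.fan_lt hf' hs1 hs2 hl).elim
    · have e1 := hf.eb.trans (hl ▸ hf'.eb.symm)
      have e2 := hf.ec.trans (hl ▸ hf'.ec.symm)
      exact Prod.ext e (Prod.ext e1 e2)
    · exact (hf'.fan_lt hf hs2 hs1 hl).elim
  · intro T hT
    obtain ⟨a0, i, hf⟩ := hF T hT
    obtain ⟨a0', i', hf'⟩ := hF T0 hT0
    refine ⟨hf.ha, ?_⟩
    have h1 := hf.near hG hf' (hs T (hY hT)) (hs T0 (hY hT0))
    have h2 := hf'.near hG hf (hs T0 (hY hT0)) (hs T (hY hT))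
    rw [hf.la, hf'.la, abs_le]
    cases σ <;> simp only [sgn] at * <;> constructor <;> linarith

theorem count_I1 {r : ℕ} {R : ℤ × ℤ → ℝ × ℝ} (p : ℤ × ℤ) (X : Finset Tr)
    (hX : ∀ T ∈ X, Fr r R T.1 T.2.1 T.2.2)
    (hs : ∀ T ∈ X, T.1 = p) : (X.card : ℝ) ≤ 4800 * (r : ℝ) ^ 2 := by
  refine count_total X hX fun v t u h σ Y hY hF => ⟨fun T => T.2.1, ldet v p - h, ?_, ?_⟩
  · intro T hT T' hT' e
    obtain ⟨a0, i, hf⟩ := hF T hT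
    obtain ⟨a0', i', hf'⟩ := hF T' hT'
    dsimp only at e
    exact Prod.ext ((hs T (hY hT)).trans (hs T' (hY hT')).symm)
      (Prod.ext e (by rw [hf.cb, hf'.cb, e]))
  · intro T hT
    obtain ⟨a0, i, hf⟩ := hF T hT
    refine ⟨hf.hb, ?_⟩
    rw [← hs T (hY hT), hf.la]; simp

theorem count_I2 {r : ℕ} {R : ℤ × ℤ → ℝ × ℝ} (p : ℤ × ℤ) (X : Finset Tr)
    (hX : ∀ T ∈ X, Fr r R T.1 T.2.1 T.2.2)
    (hs : ∀ T ∈ X, T.2.1 = p) : (X.card : ℝ) ≤ 4800 * (r : ℝ) ^ 2 := by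
  refine count_total X hX fun v t u h σ Y hY hF => ⟨fun T => T.1, ldet v p + h, ?_, ?_⟩
  · intro T hT T' hT' e
    obtain ⟨a0, i, hf⟩ := hF T hT
    obtain ⟨a0', i', hf'⟩ := hF T' hT'
    have e2 := (hs T (hY hT)).trans (hs T' (hY hT')).symm
    exact Prod.ext e (Prod.ext e2 (by rw [hf.cb, hf'.cb, e2]))
  · intro T hT
    obtain ⟨a0, i, hf⟩ := hF T hT
    refine ⟨hf.ha, ?_⟩
    rw [← hs T (hY hT), hf.la]; simp

theorem count_I3 {r : ℕ} {R : ℤ × ℤ → ℝ × ℝ} (p : ℤ × ℤ) (X : Finset Tr)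
    (hX : ∀ T ∈ X, Fr r R T.1 T.2.1 T.2.2)
    (hs : ∀ T ∈ X, T.2.2 = p) : (X.card : ℝ) ≤ 4800 * (r : ℝ) ^ 2 := by
  refine count_total X hX fun v t u h σ Y hY hF => ⟨fun T => T.1, ldet v p + h, ?_, ?_⟩
  · intro T hT T' hT' e
    obtain ⟨a0, i, hf⟩ := hF T hT
    obtain ⟨a0', i', hf'⟩ := hF T' hT'
    have e2 := (hs T (hY hT)).trans (hs T' (hY hT')).symm
    exact Prod.ext e (Prod.ext (by rw [hf.bc, hf'.bc, e2]) e2)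
  · intro T hT
    obtain ⟨a0, i, hf⟩ := hF T hT
    refine ⟨hf.ha, ?_⟩
    rw [← hs T (hY hT), hf.la, hf.bc, ldet_pt]; simp

/-- triples incident to a fixed point -/
theorem count_I {r : ℕ} {R : ℤ × ℤ → ℝ × ℝ} (p : ℤ × ℤ) (X : Finset Tr)
    (hX : ∀ T ∈ X, Fr r R T.1 T.2.1 T.2.2)
    (hs : ∀ T ∈ X, T.1 = p ∨ T.2.1 = p ∨ T.2.2 = p) : (X.card : ℝ) ≤ 14400 * (r : ℝ) ^ 2 := by
  have h1 := count_I1 p (X.filter fun T => T.1 = p) (R := R) (r := r)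
    (fun T hT => hX T (Finset.mem_filter.1 hT).1) (fun T hT => (Finset.mem_filter.1 hT).2)
  have h2 := count_I2 p (X.filter fun T => T.2.1 = p) (R := R) (r := r)
    (fun T hT => hX T (Finset.mem_filter.1 hT).1) (fun T hT => (Finset.mem_filter.1 hT).2)
  have h3 := count_I3 p (X.filter fun T => T.2.2 = p) (R := R) (r := r)
    (fun T hT => hX T (Finset.mem_filter.1 hT).1) (fun T hT => (Finset.mem_filter.1 hT).2)
  have hsub : X ⊆ (X.filter fun T => T.1 = p) ∪ ((X.filter fun T => T.2.1 = p) ∪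
      (X.filter fun T => T.2.2 = p)) := by
    intro T hT
    simp only [Finset.mem_union, Finset.mem_filter]
    have := hs T hT
    tauto
  have hc := (Finset.card_le_card hsub).trans ((Finset.card_union_le _ _).trans
    (Nat.add_le_add_left (Finset.card_union_le _ _) _))
  have hc' : (X.card : ℝ) ≤ (X.filter fun T => T.1 = p).card + ((X.filter fun T => T.2.1 = p).card +
      (X.filter fun T => T.2.2 = p).card) := by exact_mod_cast hc
  linarith


theorem rank_filter {n : ℕ} {P : ℕ → ℝ × ℝ} (hP : ∀ i j, i < j → j < n → (P i).1 < (P j).1)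
    {i : ℕ} (hi : i < n) :
    (((Finset.range n).image P).filter fun q => q.1 < (P i).1).card = i := by
  have hmono : ∀ a b, a < n → b < n → (P a).1 < (P b).1 → a < b := by
    intro a b ha hb h
    rcases lt_trichotomy a b with h' | h' | h'
    · exact h'
    · subst h'; exact absurd h (lt_irrefl _)
    · exact absurd (hP b a h' ha) (not_lt.2 h.le)
  have : (((Finset.range n).image P).filter fun q => q.1 < (P i).1) = (Finset.range i).image P := by
    ext q
    simp only [Finset.mem_filter, Finset.mem_image, Finset.mem_range]
    constructor
    · rintro ⟨⟨j, hj, rfl⟩, hlt⟩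
      exact ⟨j, hmono j i hj hi hlt, rfl⟩
    · rintro ⟨j, hj, rfl⟩
      exact ⟨⟨j, by omega, rfl⟩, hP j i hj hi⟩
  rw [this, Finset.card_image_of_injOn, Finset.card_range]
  intro a ha b hb hab
  simp only [Finset.coe_range, Set.mem_Iio] at ha hb
  rcases lt_trichotomy a b with h' | h' | h'
  · have := hP a b h' (by omega); rw [hab] at this; exact absurd this (lt_irrefl _)
  · exact h'
  · have := hP b a h' (by omega); rw [hab] at this; exact absurd this (lt_irrefl _)

theorem horton_seq {H : Finset (ℝ × ℝ)} (h : IsHorton H) : ∀ (n : ℕ) (P : ℕ → ℝ × ℝ),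
    (∀ i j, i < j → j < n → (P i).1 < (P j).1) → H = (Finset.range n).image P → HSeq n P := by
  have hcardn : ∀ (n : ℕ) (P : ℕ → ℝ × ℝ), (∀ i j, i < j → j < n → (P i).1 < (P j).1) →
      ((Finset.range n).image P).card = n := by
    intro n P hP
    rw [Finset.card_image_of_injOn, Finset.card_range]
    intro a ha b hb hab
    simp only [Finset.coe_range, Set.mem_Iio] at ha hb
    rcases lt_trichotomy a b with h' | h' | h'
    · have := hP a b h' (by omega); rw [hab] at this; exact absurd this (lt_irrefl _)
    · exact h'
    · have := hP b a h' (by omega); rw [hab] at this; exact absurd this (lt_irrefl _)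
  induction h with
  | small H _ _ hc =>
    intro n P hP hH
    rw [hH, hcardn n P hP] at hc
    exact .small _ _ hc
  | split H _ _ hc h0 h1 hhigh hdeep ih0 ih1 =>
    intro n P hP hH
    have hE : ∀ i, 2 * i < n → P (2 * i) ∈ evenPart H := by
      intro i hi
      rw [evenPart, Finset.mem_filter, hH, rank_filter hP hi]
      exact ⟨Finset.mem_image_of_mem _ (Finset.mem_range.2 hi), by simp⟩
    have hO : ∀ i, 2 * i + 1 < n → P (2 * i + 1) ∈ oddPart H := by
      intro i hi
      rw [oddPart, Finset.mem_filter, hH, rank_filter hP hi]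
      refine ⟨Finset.mem_image_of_mem _ (Finset.mem_range.2 hi), ?_⟩
      rw [Nat.even_iff]; omega
    have hE' : evenPart H = (Finset.range ((n + 1) / 2)).image (fun i => P (2 * i)) := by
      ext q
      simp only [Finset.mem_image, Finset.mem_range]
      constructor
      · intro hq
        rw [evenPart, Finset.mem_filter] at hq
        obtain ⟨hq1, hq2⟩ := hq
        rw [hH, Finset.mem_image] at hq1
        obtain ⟨j, hj, rfl⟩ := hq1
        rw [Finset.mem_range] at hj
        rw [hH, rank_filter hP hj] at hq2
        obtain ⟨l, hl⟩ := hq2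
        exact ⟨l, by omega, by congr 1; omega⟩
      · rintro ⟨i, hi, rfl⟩
        exact hE i (by omega)
    have hO' : oddPart H = (Finset.range (n / 2)).image (fun i => P (2 * i + 1)) := by
      ext q
      simp only [Finset.mem_image, Finset.mem_range]
      constructor
      · intro hq
        rw [oddPart, Finset.mem_filter] at hq
        obtain ⟨hq1, hq2⟩ := hq
        rw [hH, Finset.mem_image] at hq1
        obtain ⟨j, hj, rfl⟩ := hq1
        rw [Finset.mem_range] at hj
        rw [hH, rank_filter hP hj] at hq2
        rw [Nat.even_iff] at hq2
        exact ⟨j / 2, by omega, by congr 1; omega⟩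
      · rintro ⟨i, hi, rfl⟩
        exact hO i (by omega)
    refine .split _ _ (ih0 _ _ ?_ hE') (ih1 _ _ ?_ hO') ?_ ?_
    · intro i j hij hj; exact hP _ _ (by omega) (by omega)
    · intro i j hij hj; exact hP _ _ (by omega) (by omega)
    · intro x y z hxy hy hz
      have := hhigh _ (hO x (by omega)) _ (hO y hy) (hP _ _ (by omega) (by omega)) _ (hE z hz)
      unfold StrictlyBelow at this
      unfold orient; linarith
    · intro x y z hxy hy hz
      have := hdeep _ (hE x (by omega)) _ (hE y hy) (hP _ _ (by omega) (by omega)) _ (hO z hz)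
      unfold StrictlyAbove at this
      unfold orient; linarith

/-- integer point as real point -/
def cst (z : ℤ × ℤ) : ℝ × ℝ := ((z.1 : ℝ), (z.2 : ℝ))

theorem cst_mem {r : ℕ} {z : ℤ × ℤ} (h : inBox r z) : cst z ∈ grid r := by
  obtain ⟨h1, h2, h3, h4⟩ := h
  rw [grid, Finset.mem_image]
  refine ⟨(z.1.toNat, z.2.toNat), ?_, ?_⟩
  · simp only [Finset.mem_product, Finset.mem_Icc]; omega
  · have e1 : ((z.1.toNat : ℤ) : ℝ) = z.1 := by rw [Int.toNat_of_nonneg (by omega)]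
    have e2 : ((z.2.toNat : ℤ) : ℝ) = z.2 := by rw [Int.toNat_of_nonneg (by omega)]
    push_cast at e1 e2
    exact Prod.ext e1 e2

theorem mem_cst {r : ℕ} {p : ℝ × ℝ} (h : p ∈ grid r) : ∃ z, inBox r z ∧ p = cst z := by
  rw [grid, Finset.mem_image] at h
  obtain ⟨⟨x, y⟩, hz, rfl⟩ := h
  simp only [Finset.mem_product, Finset.mem_Icc] at hz
  exact ⟨(x, y), ⟨by simp only; omega, by simp only; omega, by simp only; omega,
    by simp only; omega⟩, by simp [cst]⟩

theorem cst_inj : Function.Injective cst := by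
  intro a b h
  simp only [cst, Prod.mk.injEq, Int.cast_inj] at h
  exact Prod.ext h.1 h.2

theorem orient_cst (a b c : ℤ × ℤ) : orient (cst a) (cst b) (cst c) = (idet3 a b c : ℝ) := by
  simp only [orient, cst, idet3]; push_cast; ring

theorem collinear_orient {a b c : ℝ × ℝ} (h : Collinear ℝ ({a, b, c} : Set (ℝ × ℝ))) :
    orient a b c = 0 := by
  rw [collinear_iff_of_mem (p₀ := a) (by simp)] at h
  obtain ⟨v, hv⟩ := h
  obtain ⟨x, hx⟩ := hv b (by simp)
  obtain ⟨y, hy⟩ := hv c (by simp)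
  rw [hx, hy]
  simp [orient]; ring

theorem close_coord {p q : ℝ × ℝ} {ε : ℝ} (h : elen p q ≤ ε) (he : ε < 1 / 4) :
    |p.1 - q.1| < 1 / 4 ∧ |p.2 - q.2| < 1 / 4 := by
  unfold elen at h
  have h1 := h.trans_lt he
  rw [Real.sqrt_lt' (by norm_num)] at h1
  constructor
  · apply abs_lt_of_sq_lt_sq _ (by norm_num); nlinarith [sq_nonneg (p.2 - q.2)]
  · apply abs_lt_of_sq_lt_sq _ (by norm_num); nlinarith [sq_nonneg (p.1 - q.1)]

theorem gridLine_eq {r n : ℕ} {v a0 : ℤ × ℤ} (hc : IsCoprime v.1 v.2) (hv : posv v)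
    (h0' : ¬ inBox r (pt a0 v (-1))) (hn : ∀ i : ℕ, inBox r (pt a0 v i) ↔ i < n) (hn2 : 2 < n) :
    gridLine r (cst (pt a0 v 0)) (cst (pt a0 v 1)) =
      (Finset.range n).image (fun i : ℕ => cst (pt a0 v i)) := by
  have h0 : inBox r (pt a0 v 0) := by simpa using (hn 0).2 (by omega)
  ext p
  rw [gridLine, Finset.mem_filter, Finset.mem_image]
  constructor
  · rintro ⟨hp, hcol⟩
    obtain ⟨z, hz, rfl⟩ := mem_cst hp
    have := collinear_orient hcol
    rw [orient_cst] at this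
    have this : idet3 (pt a0 v 0) (pt a0 v 1) z = 0 := by exact_mod_cast this
    obtain ⟨m, hm⟩ := par_pt hc (a := a0) (b := z) (by simp only [idet3, pt] at this; linarith)
    have hm0 : 0 ≤ m := by
      by_contra hneg
      exact h0' (inBox.btw (i := m) (j := 0) (hm ▸ hz) h0 (by omega) (by omega))
    obtain ⟨l, rfl⟩ := Int.eq_ofNat_of_zero_le hm0
    refine ⟨l, Finset.mem_range.2 ((hn l).1 (hm ▸ hz)), by rw [hm]⟩
  · rintro ⟨i, hi, rfl⟩
    rw [Finset.mem_range] at hi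
    refine ⟨cst_mem ((hn i).2 hi), ?_⟩
    rw [collinear_iff_of_mem (p₀ := cst a0) (by simp [pt_zero])]
    refine ⟨cst v, ?_⟩
    intro p hp
    simp only [Set.mem_insert_iff, Set.mem_singleton_iff] at hp
    rcases hp with rfl | rfl | rfl
    · exact ⟨0, by simp [pt_zero]⟩
    · refine ⟨1, Prod.ext ?_ ?_⟩ <;> simp [cst, pt, add_comm]
    · refine ⟨i, Prod.ext ?_ ?_⟩ <;> simp [cst, pt, add_comm]

theorem good_F {r : ℕ} {ε : ℝ} {f : ℝ × ℝ → ℝ × ℝ} (hS : IsSquaredHorton r ε f) :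
    Good r (fun z => f (cst z)) := by
  constructor
  · intro a b c ha hb hc h
    have e : 0 < orient (cst a) (cst b) (cst c) := by rw [orient_cst]; exact_mod_cast h
    exact (hS.orient_iff _ (cst_mem ha) _ (cst_mem hb) _ (cst_mem hc) e.ne').1 e
  · intro v a0 hc hv h0 h0' n hn
    by_cases hn2 : n ≤ 2
    · exact .small _ _ hn2
    push Not at hn2
    have hb0 : inBox r (pt a0 v 0) := by simpa using (hn 0).2 (by omega)
    have hb1 : inBox r (pt a0 v 1) := by simpa using (hn 1).2 (by omega)
    have hne : cst (pt a0 v 0) ≠ cst (pt a0 v 1) := fun h => by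
      have := pt_inj hv (cst_inj h); omega
    have hcl : ∀ i : ℕ, i < n → |(f (cst (pt a0 v i))).1 - (cst (pt a0 v i)).1| < 1 / 4 ∧
        |(f (cst (pt a0 v i))).2 - (cst (pt a0 v i)).2| < 1 / 4 := fun i hi =>
      close_coord (hS.close _ (cst_mem ((hn i).2 hi))) hS.eps_lt
    rcases hv with hv1 | hv1
    · have := hS.nonvertical _ (cst_mem hb0) _ (cst_mem hb1) hne (by
        simp only [cst, pt]; push_cast
        intro h; have : (v.1 : ℝ) = 0 := by linarith
        have : v.1 = 0 := by exact_mod_cast this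
        omega)
      refine horton_seq this n _ ?_ ?_
      · intro i j hij hj
        have h1 := abs_lt.1 (hcl i (by omega)).1
        have h2 := abs_lt.1 (hcl j hj).1
        have h3 : (pt a0 v i).1 + 1 ≤ (pt a0 v j).1 := by
          simp only [pt]; nlinarith [show (i : ℤ) + 1 ≤ j by omega]
        have h4 : (cst (pt a0 v i)).1 + 1 ≤ (cst (pt a0 v j)).1 := by
          simp only [cst]; exact_mod_cast h3
        linarith [h1.1, h1.2, h2.1, h2.2]
      · rw [gridLine_eq hc (Or.inl hv1) h0' hn hn2, Finset.image_image]; rfl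
    · have := hS.vertical _ (cst_mem hb0) _ (cst_mem hb1) hne (by
        simp only [cst, pt, hv1.1]; push_cast; ring)
      have := horton_seq this n (fun i : ℕ => rotCW (f (cst (pt a0 v i)))) ?_ ?_
      · refine this.congr _ fun x y z _ _ _ _ _ _ h => ?_
        simp only [orient, rotCW] at *; linarith
      · intro i j hij hj
        have h1 := abs_lt.1 (hcl i (by omega)).2
        have h2 := abs_lt.1 (hcl j hj).2
        have h3 : (pt a0 v i).2 + 1 ≤ (pt a0 v j).2 := by
          simp only [pt]; nlinarith [show (i : ℤ) + 1 ≤ j by omega, hv1.2]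
        have h4 : (cst (pt a0 v i)).2 + 1 ≤ (cst (pt a0 v j)).2 := by
          simp only [cst]; exact_mod_cast h3
        simp only [rotCW]
        linarith [h1.1, h1.2, h2.1, h2.2]
      · rw [gridLine_eq hc (Or.inr hv1) h0' hn hn2, Finset.image_image, Finset.image_image]; rfl

theorem good_R {m k : ℕ} (c : DiamondSquaredHorton m k) {R : ℤ × ℤ → ℝ × ℝ}
    (hR : ∀ z, inBox c.r z → R z ∈ c.D (c.f (cst z))) : Good c.r R := by
  have hF := good_F c.sqH
  have hm : ∀ z, inBox c.r z → c.f (cst z) ∈ (grid c.r).image c.f := fun z hz =>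
    Finset.mem_image_of_mem _ (cst_mem hz)
  have hne : ∀ z w, inBox c.r z → inBox c.r w → z ≠ w → c.f (cst z) ≠ c.f (cst w) :=
    fun z w hz hw h e => h (cst_inj (c.sqH.inj (cst_mem hz) (cst_mem hw) e))
  have tr : ∀ x y z, inBox c.r x → inBox c.r y → inBox c.r z → x ≠ y → x ≠ z → y ≠ z →
      0 < orient (c.f (cst x)) (c.f (cst y)) (c.f (cst z)) → 0 < orient (R x) (R y) (R z) := by
    intro x y z hx hy hz h1 h2 h3 h
    exact (c.orient_pres _ (hm x hx) _ (hm y hy) _ (hm z hz) (hne _ _ hx hy h1) (hne _ _ hx hz h2)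
      (hne _ _ hy hz h3) _ (hR x hx) _ (hR y hy) _ (hR z hz)).2.1 h
  constructor
  · intro x y z hx hy hz h
    refine tr x y z hx hy hz ?_ ?_ ?_ (hF.ori x y z hx hy hz h)
    · rintro rfl; simp [idet3] at h
    · rintro rfl; simp [idet3] at h
    · rintro rfl; simp only [idet3] at h; linarith
  · intro v a0 hc hv h0 h0' n hn
    refine (hF.hor v a0 hc hv h0 h0' n hn).congr _ fun x y z hx hy hz h1 h2 h3 h => ?_
    refine tr _ _ _ ((hn x).2 hx) ((hn y).2 hy) ((hn z).2 hz) ?_ ?_ ?_ h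
    · exact fun e => h1 (by exact_mod_cast pt_inj hv e)
    · exact fun e => h2 (by exact_mod_cast pt_inj hv e)
    · exact fun e => h3 (by exact_mod_cast pt_inj hv e)


theorem comb3 {S : Set (ℝ × ℝ)} (hS : Convex ℝ S) {a b c s : ℝ × ℝ} (ha : a ∈ S) (hb : b ∈ S)
    (hc : c ∈ S) {x y z : ℝ} (hx : 0 ≤ x) (hy : 0 ≤ y) (hz : 0 ≤ z) (hD : 0 < x + y + z)
    (h1 : (x + y + z) * s.1 = x * a.1 + y * b.1 + z * c.1)
    (h2 : (x + y + z) * s.2 = x * a.2 + y * b.2 + z * c.2) : s ∈ S := by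
  have hcm := hS.sum_mem (t := Finset.univ) (w := ![x / (x + y + z), y / (x + y + z), z / (x + y + z)])
    (z := ![a, b, c]) (by
      intro i _
      fin_cases i
      · simpa using div_nonneg hx hD.le
      · simpa using div_nonneg hy hD.le
      · simpa using div_nonneg hz hD.le)
    (by simp [Fin.sum_univ_three]; field_simp)
    (by
      intro i _
      fin_cases i
      · simpa using ha
      · simpa using hb
      · simpa using hc)
  convert hcm using 1
  simp only [Fin.sum_univ_three]
  refine Prod.ext ?_ ?_
  · simp; field_simp; linarith
  · simp; field_simp; linarith

theorem bary1 (a b c s : ℝ × ℝ) : (orient b c s + orient c a s + orient a b s) * s.1 =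
    orient b c s * a.1 + orient c a s * b.1 + orient a b s * c.1 := by
  simp only [orient]; ring

theorem bary2 (a b c s : ℝ × ℝ) : (orient b c s + orient c a s + orient a b s) * s.2 =
    orient b c s * a.2 + orient c a s * b.2 + orient a b s * c.2 := by
  simp only [orient]; ring

theorem cont_orient (p q : ℝ × ℝ) : Continuous fun x => orient p q x := by
  unfold orient; fun_prop

theorem posTri_interior {a b c s : ℝ × ℝ} (h : posTri a b c s) :
    s ∈ interior (convexHull ℝ ({a, b, c} : Set (ℝ × ℝ))) := by
  have ho : IsOpen {x | posTri a b c x} := by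
    have h1 := isOpen_lt continuous_const (cont_orient a b) (f := fun _ => (0 : ℝ))
    have h2 := isOpen_lt continuous_const (cont_orient b c) (f := fun _ => (0 : ℝ))
    have h3 := isOpen_lt continuous_const (cont_orient c a) (f := fun _ => (0 : ℝ))
    exact h1.inter (h2.inter h3)
  refine interior_maximal ?_ ho h
  rintro x ⟨h1, h2, h3⟩
  exact comb3 (convex_convexHull ℝ _) (subset_convexHull ℝ _ (by simp : a ∈ ({a, b, c} : Set _)))
    (subset_convexHull ℝ _ (by simp : b ∈ ({a, b, c} : Set _)))
    (subset_convexHull ℝ _ (by simp : c ∈ ({a, b, c} : Set _))) h2.le h3.le h1.le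
    (by linarith) (bary1 a b c x) (bary2 a b c x)

theorem set3_swap (a b c : ℝ × ℝ) : ({a, b, c} : Set (ℝ × ℝ)) = {a, c, b} := by
  ext; simp; tauto

theorem inTri_interior {a b c s : ℝ × ℝ} (h : inTri a b c s) :
    s ∈ interior (convexHull ℝ ({a, b, c} : Set (ℝ × ℝ))) := by
  rcases h with h | h
  · exact posTri_interior h
  · rw [set3_swap]; exact posTri_interior h

theorem half_convex (p q : ℝ × ℝ) : Convex ℝ {x | 0 ≤ orient p q x} := by
  intro x hx y hy α β hα hβ hαβ
  simp only [Set.mem_setOf_eq] at *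
  have : orient p q (α • x + β • y) = α * orient p q x + β * orient p q y := by
    have e : β = 1 - α := by linarith
    subst e
    simp [orient]; ring
  rw [this]; positivity

theorem push {U : Set (ℝ × ℝ)} {s : ℝ × ℝ} (hU : s ∈ interior U) (d : ℝ × ℝ) :
    ∃ t : ℝ, 0 < t ∧ s + t • d ∈ U := by
  have hc : ContinuousAt (fun t : ℝ => s + t • d) 0 := by fun_prop
  have h1 : U ∈ nhds ((fun t : ℝ => s + t • d) 0) := by
    simpa using mem_interior_iff_mem_nhds.1 hU
  have h2 : ∀ᶠ t in nhdsWithin (0 : ℝ) (Set.Ioi 0), s + t • d ∈ U :=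
    (hc.eventually_mem h1).filter_mono nhdsWithin_le_nhds
  obtain ⟨t, ht1, ht2⟩ := (h2.and self_mem_nhdsWithin).exists
  exact ⟨t, ht2, ht1⟩

theorem int_half {U : Set (ℝ × ℝ)} {a b c s : ℝ × ℝ} (hU : s ∈ interior U)
    (hsub : ∀ x ∈ U, 0 ≤ orient a b x) (h : 0 < orient a b c) : 0 < orient a b s := by
  obtain ⟨t, ht, hm⟩ := push hU (a - c)
  have h1 := hsub _ hm
  have e : orient a b (s + t • (a - c)) = orient a b s - t * orient a b c := by
    simp [orient]; ring
  rw [e] at h1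
  nlinarith [mul_pos ht h]

theorem interior_posTri {a b c s : ℝ × ℝ} (h : 0 < orient a b c)
    (hs : s ∈ interior (convexHull ℝ ({a, b, c} : Set (ℝ × ℝ)))) : posTri a b c s := by
  have e1 := orient_rot a b c
  have e2 := orient_rot b c a
  have z1 : ∀ p q : ℝ × ℝ, orient p q p = 0 := by intro p q; simp [orient]
  have z2 : ∀ p q : ℝ × ℝ, orient p q q = 0 := by intro p q; simp [orient]; ring
  refine ⟨int_half hs ?_ h, int_half hs ?_ (c := a) (by linarith),
    int_half hs ?_ (c := b) (by linarith)⟩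
  all_goals
    refine fun x hx => convexHull_min (t := {x | 0 ≤ orient _ _ x}) ?_ (half_convex _ _) hx
    intro y hy
    simp only [Set.mem_insert_iff, Set.mem_singleton_iff] at hy
    rcases hy with rfl | rfl | rfl <;> simp only [Set.mem_setOf_eq, z1, z2] <;> linarith

theorem interior_inTri {a b c s : ℝ × ℝ} (h : orient a b c ≠ 0)
    (hs : s ∈ interior (convexHull ℝ ({a, b, c} : Set (ℝ × ℝ)))) : inTri a b c s := by
  rcases lt_or_gt_of_ne h with h | h
  · right
    rw [set3_swap] at hs
    exact interior_posTri (by rw [orient_swap']; linarith) hs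
  · left; exact interior_posTri h hs

theorem move_pos {A B : Set (ℝ × ℝ)} (hA : Convex ℝ A) (hB : Convex ℝ B) {x x' y z s : ℝ × ℝ}
    (hxA : x ∈ A) (hx'A : x' ∈ A) (hyA : y ∈ A) (hxB : x ∈ B) (hx'B : x' ∈ B) (hzB : z ∈ B)
    (hsA : s ∉ A) (hsB : s ∉ B) (h : posTri x y z s) : posTri x' y z s := by
  obtain ⟨h1, h2, h3⟩ := h
  set w : ℝ → ℝ × ℝ := fun τ => x + τ • (x' - x) with hw
  have w0 : w 0 = x := by simp [hw]
  have w1 : w 1 = x' := by simp [hw]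
  have wA : ∀ τ ∈ Set.Icc (0 : ℝ) 1, w τ ∈ A := fun τ hτ => hA.add_smul_sub_mem hxA hx'A hτ
  have wB : ∀ τ ∈ Set.Icc (0 : ℝ) 1, w τ ∈ B := fun τ hτ => hB.add_smul_sub_mem hxB hx'B hτ
  by_contra hcon
  have hcont : ContinuousOn (fun τ => min (orient (w τ) y s) (orient z (w τ) s))
      (Set.Icc (0 : ℝ) 1) := by
    apply Continuous.continuousOn
    simp only [orient, hw]
    fun_prop
  have hle : min (orient (w 1) y s) (orient z (w 1) s) ≤ 0 := by
    rw [w1]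
    by_contra hc
    push Not at hc
    rw [lt_min_iff] at hc
    exact hcon ⟨hc.1, h2, hc.2⟩
  have hge : 0 ≤ min (orient (w 0) y s) (orient z (w 0) s) := by
    rw [w0]; exact le_min h1.le h3.le
  obtain ⟨τ, hτ, h0⟩ := intermediate_value_Icc' (zero_le_one) hcont ⟨hle, hge⟩
  dsimp only at h0
  have b1 := bary1 (w τ) y z s
  have b2 := bary2 (w τ) y z s
  rcases min_choice (orient (w τ) y s) (orient z (w τ) s) with hm | hm
  · have f1 : orient (w τ) y s = 0 := hm.symm.trans h0
    have f3 : 0 ≤ orient z (w τ) s := by rw [← h0]; exact min_le_right _ _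
    rw [f1] at b1 b2
    exact hsA (comb3 hA (wA τ hτ) hyA hyA h2.le f3 le_rfl (by linarith) (by linarith) (by linarith))
  · have f1 : orient z (w τ) s = 0 := hm.symm.trans h0
    have f3 : 0 ≤ orient (w τ) y s := by rw [← h0]; exact min_le_left _ _
    rw [f1] at b1 b2
    exact hsB (comb3 hB (wB τ hτ) hzB hzB h2.le le_rfl f3 (by linarith) (by linarith) (by linarith))

theorem move {A B : Set (ℝ × ℝ)} (hA : Convex ℝ A) (hB : Convex ℝ B) {x x' y z s : ℝ × ℝ}
    (hxA : x ∈ A) (hx'A : x' ∈ A) (hyA : y ∈ A) (hxB : x ∈ B) (hx'B : x' ∈ B) (hzB : z ∈ B)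
    (hsA : s ∉ A) (hsB : s ∉ B) (h : inTri x y z s) : inTri x' y z s := by
  rcases h with h | h
  · exact Or.inl (move_pos hA hB hxA hx'A hyA hxB hx'B hzB hsA hsB h)
  · exact Or.inr (move_pos hB hA hxB hx'B hzB hxA hx'A hyA hsB hsA h)

theorem move3 {X Y Z : Finset (ℝ × ℝ)} {x x' y y' z z' s : ℝ × ℝ} (hx : x ∈ X) (hx' : x' ∈ X)
    (hy : y ∈ Y) (hy' : y' ∈ Y) (hz : z ∈ Z) (hz' : z' ∈ Z)
    (h1 : s ∉ convexHull ℝ (↑(X ∪ Y) : Set (ℝ × ℝ)))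
    (h2 : s ∉ convexHull ℝ (↑(X ∪ Z) : Set (ℝ × ℝ)))
    (h3 : s ∉ convexHull ℝ (↑(Y ∪ Z) : Set (ℝ × ℝ))) (h : inTri x y z s) : inTri x' y' z' s := by
  have l : ∀ {U V : Finset (ℝ × ℝ)} {p}, p ∈ U → p ∈ convexHull ℝ (↑(U ∪ V) : Set (ℝ × ℝ)) :=
    fun hp => subset_convexHull ℝ _ (by exact_mod_cast Finset.mem_union_left _ hp)
  have rr : ∀ {U V : Finset (ℝ × ℝ)} {p}, p ∈ V → p ∈ convexHull ℝ (↑(U ∪ V) : Set (ℝ × ℝ)) :=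
    fun hp => subset_convexHull ℝ _ (by exact_mod_cast Finset.mem_union_right _ hp)
  have hc := fun S : Set (ℝ × ℝ) => convex_convexHull ℝ S
  have g1 := move (hc _) (hc _) (l hx) (l hx') (rr hy) (l hx) (l hx') (rr hz) h1 h2 h
  have g2 := move (hc _) (hc _) (l hy) (l hy') (rr hz) (rr hy) (rr hy') (l hx') h3 h1 (inTri_rot g1)
  have g3 := move (hc _) (hc _) (rr hz) (rr hz') (l hx') (rr hz) (rr hz') (l hy') h2 h3 (inTri_rot g2)
  exact inTri_rot g3

theorem cover4 {α : Type} (bad : α → α → Prop) (h6 : ∀ a b c d e g, bad a b → bad c d → bad e g →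
      c ≠ a → c ≠ b → d ≠ a → d ≠ b → e ≠ a → e ≠ b → e ≠ c → e ≠ d → g ≠ a → g ≠ b → g ≠ c →
      g ≠ d → False) :
    ∃ K : Finset α, K.card ≤ 4 ∧ ∀ a b, bad a b → a ∈ K ∨ b ∈ K := by
  by_cases h1 : ∃ a b, bad a b
  · obtain ⟨a, b, hab⟩ := h1
    by_cases h2 : ∃ c d, bad c d ∧ c ≠ a ∧ c ≠ b ∧ d ≠ a ∧ d ≠ b
    · obtain ⟨c, d, hcd, q1, q2, q3, q4⟩ := h2
      refine ⟨{a, b, c, d}, Finset.card_le_four, fun e g heg => ?_⟩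
      by_contra hcon
      simp only [Finset.mem_insert, Finset.mem_singleton, not_or] at hcon
      obtain ⟨⟨e1, e2, e3, e4⟩, g1, g2, g3, g4⟩ := hcon
      exact h6 a b c d e g hab hcd heg q1 q2 q3 q4 e1 e2 e3 e4 g1 g2 g3 g4
    · refine ⟨{a, b}, Finset.card_le_two.trans (by norm_num), fun c d hcd => ?_⟩
      by_contra hcon
      simp only [Finset.mem_insert, Finset.mem_singleton, not_or] at hcon
      exact h2 ⟨c, d, hcd, hcon.1.1, hcon.1.2, hcon.2.1, hcon.2.2⟩
  · exact ⟨∅, by simp, fun a b h => (h1 ⟨a, b, h⟩).elim⟩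


def boxF (r : ℕ) : Finset (ℤ × ℤ) := Finset.Icc 1 (r : ℤ) ×ˢ Finset.Icc 1 (r : ℤ)

theorem mem_boxF {r : ℕ} {z : ℤ × ℤ} : z ∈ boxF r ↔ inBox r z := by
  simp only [boxF, Finset.mem_product, Finset.mem_Icc, inBox]; tauto

theorem card_boxF (r : ℕ) : (boxF r).card = r ^ 2 := by
  simp [boxF, sq]

def tset (x : (ℝ × ℝ) × (ℝ × ℝ) × (ℝ × ℝ)) : Finset (ℝ × ℝ) := {x.1, x.2.1, x.2.2}

/-- the triples of diamonds that can carry a stabbed empty triangle -/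
theorem W_exists {r : ℕ} {R : ℤ × ℤ → ℝ × ℝ} (hG : Good r R) (s : ℝ × ℝ) (K : Finset (ℤ × ℤ))
    (hK : K.card ≤ 4) (hKB : ∀ z ∈ K, inBox r z) :
    ∃ W : Finset Tr, (W.card : ℝ) ≤ 62409 * (r : ℝ) ^ 2 ∧
      (∀ T ∈ W, inBox r T.1 ∧ inBox r T.2.1 ∧ inBox r T.2.2) ∧
      (∀ p, inBox r p → (p, p, p) ∈ W) ∧
      (∀ p q, inBox r p → inBox r q → (p ∈ K ∨ q ∈ K) → (p, p, q) ∈ W) ∧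
      (∀ a b c, Fr r R a b c → ((a ∈ K ∨ b ∈ K ∨ c ∈ K) ∨ inTri (R a) (R b) (R c) s) →
        (a, b, c) ∈ W) := by
  set X : Finset Tr := (boxF r ×ˢ boxF r ×ˢ boxF r).filter (fun T => Fr r R T.1 T.2.1 T.2.2) with hX
  have hXF : ∀ T ∈ X, Fr r R T.1 T.2.1 T.2.2 := fun T hT => (Finset.mem_filter.1 hT).2
  set W1 : Finset Tr := (boxF r).image (fun p => (p, p, p)) with hW1
  set W2 : Finset Tr := (K ×ˢ boxF r).image (fun p => (p.1, p.1, p.2)) with hW2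
  set W3 : Finset Tr := (K ×ˢ boxF r).image (fun p => (p.2, p.2, p.1)) with hW3
  set W4 : Finset Tr := K.biUnion (fun p => X.filter fun T => T.1 = p ∨ T.2.1 = p ∨ T.2.2 = p)
    with hW4
  set W5 : Finset Tr := X.filter (fun T => inTri (R T.1) (R T.2.1) (R T.2.2) s) with hW5
  have c1 : (W1.card : ℝ) ≤ r ^ 2 := by
    have := Finset.card_image_le (s := boxF r) (f := fun p => ((p, p, p) : Tr))
    rw [card_boxF] at this; exact_mod_cast this
  have ckb : (K ×ˢ boxF r).card ≤ 4 * r ^ 2 := by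
    rw [Finset.card_product, card_boxF]; exact Nat.mul_le_mul_right _ hK
  have c2 : (W2.card : ℝ) ≤ 4 * r ^ 2 := by exact_mod_cast Finset.card_image_le.trans ckb
  have c3 : (W3.card : ℝ) ≤ 4 * r ^ 2 := by exact_mod_cast Finset.card_image_le.trans ckb
  have c4 : (W4.card : ℝ) ≤ 57600 * r ^ 2 := by
    have h1 : W4.card ≤ ∑ p ∈ K, (X.filter fun T => T.1 = p ∨ T.2.1 = p ∨ T.2.2 = p).card :=
      Finset.card_biUnion_le
    have h2 : ∀ p ∈ K, ((X.filter fun T => T.1 = p ∨ T.2.1 = p ∨ T.2.2 = p).card : ℝ) ≤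
        14400 * (r : ℝ) ^ 2 := fun p _ => count_I p _
      (fun T hT => hXF T (Finset.mem_filter.1 hT).1) (fun T hT => (Finset.mem_filter.1 hT).2)
    have h3 := Finset.sum_le_card_nsmul K _ _ h2
    have h4 : (W4.card : ℝ) ≤ ∑ p ∈ K,
        ((X.filter fun T => T.1 = p ∨ T.2.1 = p ∨ T.2.2 = p).card : ℝ) := by exact_mod_cast h1
    have h5 : (K.card : ℝ) ≤ 4 := by exact_mod_cast hK
    rw [nsmul_eq_mul] at h3
    nlinarith [sq_nonneg (r : ℝ)]
  have c5 : (W5.card : ℝ) ≤ 4800 * r ^ 2 := count_S hG s _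
      (fun T hT => hXF T (Finset.mem_filter.1 hT).1) (fun T hT => (Finset.mem_filter.1 hT).2)
  refine ⟨W1 ∪ (W2 ∪ (W3 ∪ (W4 ∪ W5))), ?_, ?_, ?_, ?_, ?_⟩
  · have q1 := Finset.card_union_le W1 (W2 ∪ (W3 ∪ (W4 ∪ W5)))
    have q2 := Finset.card_union_le W2 (W3 ∪ (W4 ∪ W5))
    have q3 := Finset.card_union_le W3 (W4 ∪ W5)
    have q4 := Finset.card_union_le W4 W5
    have q : (W1 ∪ (W2 ∪ (W3 ∪ (W4 ∪ W5)))).card ≤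
        W1.card + W2.card + W3.card + W4.card + W5.card := by omega
    have q' : ((W1 ∪ (W2 ∪ (W3 ∪ (W4 ∪ W5)))).card : ℝ) ≤
        W1.card + W2.card + W3.card + W4.card + W5.card := by exact_mod_cast q
    linarith
  · have hXB : ∀ T ∈ X, inBox r T.1 ∧ inBox r T.2.1 ∧ inBox r T.2.2 := by
      intro T hT
      have := (Finset.mem_filter.1 hT).1
      simpa only [Finset.mem_product, mem_boxF] using this
    intro T hT
    simp only [Finset.mem_union] at hT
    rcases hT with hT | hT | hT | hT | hT
    · rw [hW1, Finset.mem_image] at hT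
      obtain ⟨p, hp, rfl⟩ := hT
      rw [mem_boxF] at hp
      exact ⟨hp, hp, hp⟩
    · rw [hW2, Finset.mem_image] at hT
      obtain ⟨p, hp, rfl⟩ := hT
      rw [Finset.mem_product, mem_boxF] at hp
      exact ⟨hKB _ hp.1, hKB _ hp.1, hp.2⟩
    · rw [hW3, Finset.mem_image] at hT
      obtain ⟨p, hp, rfl⟩ := hT
      rw [Finset.mem_product, mem_boxF] at hp
      exact ⟨hp.2, hp.2, hKB _ hp.1⟩
    · rw [hW4, Finset.mem_biUnion] at hT
      obtain ⟨p, _, hp⟩ := hT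
      exact hXB T (Finset.mem_filter.1 hp).1
    · exact hXB T (Finset.mem_filter.1 hT).1
  · intro p hp
    exact Finset.mem_union_left _ (Finset.mem_image.2 ⟨p, mem_boxF.2 hp, rfl⟩)
  · intro p q hp hq h
    simp only [Finset.mem_union]
    rcases h with h | h
    · exact Or.inr (Or.inl (Finset.mem_image.2
        ⟨(p, q), Finset.mem_product.2 ⟨h, mem_boxF.2 hq⟩, rfl⟩))
    · exact Or.inr (Or.inr (Or.inl (Finset.mem_image.2
        ⟨(q, p), Finset.mem_product.2 ⟨h, mem_boxF.2 hp⟩, rfl⟩)))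
  · intro a b c hF h
    have hT : ((a, b, c) : Tr) ∈ X := by
      rw [hX, Finset.mem_filter]
      refine ⟨?_, hF⟩
      obtain ⟨v, t, u, h, σ, a0, i, hf⟩ := hF
      simp only [Finset.mem_product, mem_boxF]
      exact ⟨hf.ha, hf.hb, hf.hc⟩
    simp only [Finset.mem_union]
    rcases h with h | h
    · refine Or.inr (Or.inr (Or.inr (Or.inl ?_)))
      rw [hW4, Finset.mem_biUnion]
      rcases h with h | h | h
      · exact ⟨a, h, Finset.mem_filter.2 ⟨hT, Or.inl rfl⟩⟩
      · exact ⟨b, h, Finset.mem_filter.2 ⟨hT, Or.inr (Or.inl rfl)⟩⟩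
      · exact ⟨c, h, Finset.mem_filter.2 ⟨hT, Or.inr (Or.inr rfl)⟩⟩
    · exact Or.inr (Or.inr (Or.inr (Or.inr (Finset.mem_filter.2 ⟨hT, h⟩))))

theorem not_inTri_self {a b c : ℝ × ℝ} : ¬ inTri a b c a := by
  have z1 : ∀ p q : ℝ × ℝ, orient p q p = 0 := by intro p q; simp [orient]
  rintro (⟨h, -, -⟩ | ⟨h, -, -⟩) <;> rw [z1] at h <;> exact lt_irrefl _ h

theorem hull_two {X Y : Finset (ℝ × ℝ)} {t : Finset (ℝ × ℝ)} {s : ℝ × ℝ} (h : t ⊆ X ∪ Y)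
    (hs : s ∈ interior (convexHull ℝ (↑t : Set (ℝ × ℝ)))) :
    s ∈ convexHull ℝ (↑(X ∪ Y) : Set (ℝ × ℝ)) :=
  convexHull_mono (by exact_mod_cast h) (interior_subset hs)

set_option maxHeartbeats 1000000 in
theorem main_bound {m k : ℕ} (c : DiamondSquaredHorton m k) (s : ℝ × ℝ) (hk : 0 < k) :
    (stabbedCount ↑c.pts s : ℝ) ≤ 62409 * (m : ℝ) * (k : ℝ) ^ 3 := by
  obtain ⟨E, hE⟩ : ∃ E : ℤ × ℤ → Finset (ℝ × ℝ), E = fun z => c.D (c.f (cst z)) := ⟨_, rfl⟩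
  have hm : ∀ z, inBox c.r z → c.f (cst z) ∈ (grid c.r).image c.f := fun z hz =>
    Finset.mem_image_of_mem _ (cst_mem hz)
  have hne : ∀ z w, inBox c.r z → inBox c.r w → z ≠ w → c.f (cst z) ≠ c.f (cst w) :=
    fun z w hz hw h e => h (cst_inj (c.sqH.inj (cst_mem hz) (cst_mem hw) e))
  have hEk : ∀ z, inBox c.r z → (E z).card = k := fun z hz => by
    rw [hE]; exact c.card_D _ (hm z hz)
  have hEne : ∀ z, inBox c.r z → ∃ x, x ∈ E z := fun z hz =>
    Finset.card_pos.1 (by rw [hEk z hz]; exact hk)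
  obtain ⟨R, hR⟩ : ∃ R : ℤ × ℤ → ℝ × ℝ, ∀ z, inBox c.r z → R z ∈ E z := by
    refine ⟨fun z => if h : ∃ x, x ∈ E z then h.choose else 0, fun z hz => ?_⟩
    have h := hEne z hz
    simp only [dif_pos h]
    exact h.choose_spec
  have hG : Good c.r R := good_R c (by rw [hE] at hR; exact hR)
  have hop : ∀ a b d, inBox c.r a → inBox c.r b → inBox c.r d → a ≠ b → a ≠ d → b ≠ d →
      ∀ x ∈ E a, ∀ y ∈ E b, ∀ z ∈ E d, orient x y z ≠ 0 ∧
        (0 < orient (c.f (cst a)) (c.f (cst b)) (c.f (cst d)) ↔ 0 < orient x y z) := by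
    intro a b d ha hb hd h1 h2 h3 x hx y hy z hz
    rw [hE] at hx hy hz
    exact c.orient_pres _ (hm a ha) _ (hm b hb) _ (hm d hd) (hne _ _ ha hb h1) (hne _ _ ha hd h2)
      (hne _ _ hb hd h3) x hx y hy z hz
  obtain ⟨bad, hbad⟩ : ∃ bad : ℤ × ℤ → ℤ × ℤ → Prop, bad = fun z w => inBox c.r z ∧ inBox c.r w ∧
      z ≠ w ∧ s ∈ convexHull ℝ (↑(E z ∪ E w) : Set (ℝ × ℝ)) := ⟨_, rfl⟩
  obtain ⟨K, hK, hKB, hKc⟩ : ∃ K : Finset (ℤ × ℤ), K.card ≤ 4 ∧ (∀ z ∈ K, inBox c.r z) ∧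
      ∀ z w, bad z w → z ∈ K ∨ w ∈ K := by
    obtain ⟨K, h1, h2⟩ := cover4 bad (by
      rw [hbad]
      rintro a b d e g h ⟨ha, hb, hab, s1⟩ ⟨hd, he, hde, s2⟩ ⟨hg, hh, hgh, s3⟩
        q1 q2 q3 q4 q5 q6 q7 q8 q9 q10 q11 q12
      rw [hE] at s1 s2 s3
      have := c.six_prop _ (hm a ha) _ (hm b hb) _ (hm d hd) _ (hm e he) _ (hm g hg) _ (hm h hh)
        (hne _ _ ha hb hab) (hne _ _ ha hd q1.symm) (hne _ _ ha he q3.symm)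
        (hne _ _ ha hg q5.symm) (hne _ _ ha hh q9.symm) (hne _ _ hb hd q2.symm)
        (hne _ _ hb he q4.symm) (hne _ _ hb hg q6.symm) (hne _ _ hb hh q10.symm)
        (hne _ _ hd he hde) (hne _ _ hd hg q7.symm) (hne _ _ hd hh q11.symm)
        (hne _ _ he hg q8.symm) (hne _ _ he hh q12.symm) (hne _ _ hg hh hgh)
      have hmem := Set.mem_inter (Set.mem_inter s1 s2) s3
      dsimp only at hmem
      rw [this] at hmem
      exact hmem)
    refine ⟨K.filter (inBox c.r), (Finset.card_filter_le _ _).trans h1,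
      fun z hz => (Finset.mem_filter.1 hz).2, fun z w hzw => ?_⟩
    have hzw' := hzw
    rw [hbad] at hzw'
    rcases h2 z w hzw with h | h
    · exact Or.inl (Finset.mem_filter.2 ⟨h, hzw'.1⟩)
    · exact Or.inr (Finset.mem_filter.2 ⟨h, hzw'.2.1⟩)
  obtain ⟨W, hWc, hWB, hWp, hWpq, hWF⟩ := W_exists hG s K hK hKB
  set U : Finset (Finset (ℝ × ℝ)) :=
    W.biUnion (fun T => (E T.1 ×ˢ E T.2.1 ×ˢ E T.2.2).image tset) with hU
  have hUc : U.card ≤ W.card * k ^ 3 := by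
    refine Finset.card_biUnion_le_card_mul _ _ _ fun T hT => ?_
    refine Finset.card_image_le.trans ?_
    obtain ⟨h1, h2, h3⟩ := hWB T hT
    rw [Finset.card_product, Finset.card_product, hEk _ h1, hEk _ h2, hEk _ h3]
    apply le_of_eq; ring
  have hUm : ∀ a b d x y z, (a, b, d) ∈ W → x ∈ E a → y ∈ E b → z ∈ E d →
      ({x, y, z} : Finset (ℝ × ℝ)) ∈ U := by
    intro a b d x y z hT hx hy hz
    rw [hU, Finset.mem_biUnion]
    refine ⟨_, hT, Finset.mem_image.2 ⟨(x, y, z), ?_, rfl⟩⟩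
    simp only [Finset.mem_product]
    exact ⟨hx, hy, hz⟩
  have hp : ∀ x, x ∈ c.pts ↔ ∃ z, inBox c.r z ∧ x ∈ E z := by
    intro x
    rw [DiamondSquaredHorton.pts, Finset.mem_biUnion]
    constructor
    · rintro ⟨p, hp, hx⟩
      rw [Finset.mem_image] at hp
      obtain ⟨q, hq, rfl⟩ := hp
      obtain ⟨z, hz, rfl⟩ := mem_cst hq
      exact ⟨z, hz, by rw [hE]; exact hx⟩
    · rintro ⟨z, hz, hx⟩
      rw [hE] at hx
      exact ⟨_, hm z hz, hx⟩
  have hsub : {t : Finset (ℝ × ℝ) | IsEmptyTriangleOf ↑c.pts t ∧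
      s ∈ interior (convexHull ℝ (↑t : Set (ℝ × ℝ)))} ⊆ (↑U : Set (Finset (ℝ × ℝ))) := by
    rintro t ⟨⟨ht3, htS, -, hemp⟩, hst⟩
    obtain ⟨x, y, z, hxy, hxz, hyz, rfl⟩ := Finset.card_eq_three.1 ht3
    obtain ⟨a, ha, hxa⟩ := (hp x).1 (by exact_mod_cast htS (by simp))
    obtain ⟨b, hb, hyb⟩ := (hp y).1 (by exact_mod_cast htS (by simp))
    obtain ⟨d, hd, hzd⟩ := (hp z).1 (by exact_mod_cast htS (by simp))
    have hbK : ∀ p q, inBox c.r p → inBox c.r q → p ≠ q → ({x, y, z} : Finset _) ⊆ E p ∪ E q →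
        p ∈ K ∨ q ∈ K := by
      intro p q hp hq hpq hs
      apply hKc
      rw [hbad]
      exact ⟨hp, hq, hpq, hull_two hs hst⟩
    have pxzy : ({x, y, z} : Finset (ℝ × ℝ)) = {x, z, y} := by ext; simp; tauto
    have pyxz : ({x, y, z} : Finset (ℝ × ℝ)) = {y, x, z} := by ext; simp; tauto
    have pyzx : ({x, y, z} : Finset (ℝ × ℝ)) = {y, z, x} := by ext; simp; tauto
    have pzxy : ({x, y, z} : Finset (ℝ × ℝ)) = {z, x, y} := by ext; simp; tauto
    have pzyx : ({x, y, z} : Finset (ℝ × ℝ)) = {z, y, x} := by ext; simp; tauto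
    show ({x, y, z} : Finset (ℝ × ℝ)) ∈ U
    by_cases hab : a = b
    · subst hab
      by_cases had : a = d
      · subst had
        exact hUm a a a x y z (hWp a ha) hxa hyb hzd
      · refine hUm a a d x y z (hWpq a d ha hd (hbK a d ha hd had ?_)) hxa hyb hzd
        intro w hw
        simp only [Finset.mem_insert, Finset.mem_singleton] at hw
        rw [Finset.mem_union]
        rcases hw with rfl | rfl | rfl <;> tauto
    by_cases had : a = d
    · subst had
      rw [pxzy]
      refine hUm a a b x z y (hWpq a b ha hb (hbK a b ha hb hab ?_)) hxa hzd hyb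
      intro w hw
      simp only [Finset.mem_insert, Finset.mem_singleton] at hw
      rw [Finset.mem_union]
      rcases hw with rfl | rfl | rfl <;> tauto
    by_cases hbd : b = d
    · subst hbd
      rw [pyzx]
      refine hUm b b a y z x (hWpq b a hb ha (hbK b a hb ha (Ne.symm hab) ?_)) hyb hzd hxa
      intro w hw
      simp only [Finset.mem_insert, Finset.mem_singleton] at hw
      rw [Finset.mem_union]
      rcases hw with rfl | rfl | rfl <;> tauto
    have hset : ((({x, y, z} : Finset (ℝ × ℝ)) : Set (ℝ × ℝ))) = {x, y, z} := by simp
    rw [hset] at hst hemp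
    have hin : inTri x y z s :=
      interior_inTri (hop a b d ha hb hd hab had hbd x hxa y hyb z hzd).1 hst
    have hcase : (a ∈ K ∨ b ∈ K ∨ d ∈ K) ∨ inTri (R a) (R b) (R d) s := by
      by_cases hk : a ∈ K ∨ b ∈ K ∨ d ∈ K
      · exact Or.inl hk
      · right
        refine move3 hxa (hR a ha) hyb (hR b hb) hzd (hR d hd) ?_ ?_ ?_ hin
        · intro h
          have := hKc a b (by rw [hbad]; exact ⟨ha, hb, hab, h⟩)
          tauto
        · intro h
          have := hKc a d (by rw [hbad]; exact ⟨ha, hd, had, h⟩)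
          tauto
        · intro h
          have := hKc b d (by rw [hbad]; exact ⟨hb, hd, hbd, h⟩)
          tauto
    have hSym : Sym3 (Fr c.r R) a b d := by
      refine frame_all hG ha hb hd hab had hbd fun e he hin' => ?_
      have hea : a ≠ e := by rintro rfl; exact not_inTri_self hin'
      have heb : b ≠ e := by rintro rfl; exact not_inTri_self (inTri_rot hin')
      have hed : d ≠ e := by rintro rfl; exact not_inTri_self (inTri_rot (inTri_rot hin'))
      refine hemp (R e) (by exact_mod_cast (hp (R e)).2 ⟨e, he, hR e he⟩) (inTri_interior ?_)
      have tr : ∀ p q, inBox c.r p → inBox c.r q → p ≠ q → p ≠ e → q ≠ e → ∀ v ∈ E p, ∀ w ∈ E q,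
          0 < orient (R p) (R q) (R e) → 0 < orient v w (R e) := by
        intro p q hp hq h1 h2 h3 v hv w hw h
        have e1 := (hop p q e hp hq he h1 h2 h3 _ (hR p hp) _ (hR q hq) _ (hR e he)).2
        have e2 := (hop p q e hp hq he h1 h2 h3 v hv w hw _ (hR e he)).2
        exact e2.1 (e1.2 h)
      rcases hin' with ⟨g1, g2, g3⟩ | ⟨g1, g2, g3⟩
      · exact Or.inl ⟨tr a b ha hb hab hea heb x hxa y hyb g1,
          tr b d hb hd hbd heb hed y hyb z hzd g2,
          tr d a hd ha (Ne.symm had) hed hea z hzd x hxa g3⟩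
      · exact Or.inr ⟨tr a d ha hd had hea hed x hxa z hzd g1,
          tr d b hd hb (Ne.symm hbd) hed heb z hzd y hyb g2,
          tr b a hb ha (Ne.symm hab) heb hea y hyb x hxa g3⟩
    rcases hSym with h | h | h | h | h | h
    · exact hUm a b d x y z (hWF _ _ _ h (hcase.imp (fun h => by rcases h with h | h | h <;> simp [h]) (id))) hxa hyb hzd
    · rw [pxzy]; exact hUm a d b x z y (hWF _ _ _ h (hcase.imp (fun h => by rcases h with h | h | h <;> simp [h]) (inTri_swap))) hxa hzd hyb
    · rw [pyxz]; exact hUm b a d y x z (hWF _ _ _ h (hcase.imp (fun h => by rcases h with h | h | h <;> simp [h]) (fun h => inTri_swap (inTri_rot h)))) hyb hxa hzd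
    · rw [pyzx]; exact hUm b d a y z x (hWF _ _ _ h (hcase.imp (fun h => by rcases h with h | h | h <;> simp [h]) (inTri_rot))) hyb hzd hxa
    · rw [pzxy]; exact hUm d a b z x y (hWF _ _ _ h (hcase.imp (fun h => by rcases h with h | h | h <;> simp [h]) (fun h => inTri_rot (inTri_rot h)))) hzd hxa hyb
    · rw [pzyx]; exact hUm d b a z y x (hWF _ _ _ h (hcase.imp (fun h => by rcases h with h | h | h <;> simp [h]) (fun h => inTri_swap (inTri_rot (inTri_rot h))))) hzd hyb hxa
  have hcount : stabbedCount ↑c.pts s ≤ W.card * k ^ 3 := by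
    refine le_trans ?_ hUc
    rw [stabbedCount, ← Set.ncard_coe_finset U]
    exact Set.ncard_le_ncard hsub (Finset.finite_toSet U)
  have hcount' : (stabbedCount ↑c.pts s : ℝ) ≤ W.card * (k : ℝ) ^ 3 := by exact_mod_cast hcount
  refine hcount'.trans (mul_le_mul_of_nonneg_right ?_ (by positivity))
  rw [c.hm]; push_cast; exact hWc

theorem zero_bound {m : ℕ} (c : DiamondSquaredHorton m 0) (s : ℝ × ℝ) :
    stabbedCount ↑c.pts s = 0 := by
  have : {t : Finset (ℝ × ℝ) | IsEmptyTriangleOf ↑c.pts t ∧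
      s ∈ interior (convexHull ℝ (↑t : Set (ℝ × ℝ)))} = ∅ := by
    rw [Set.eq_empty_iff_forall_notMem]
    rintro t ⟨⟨ht3, htS, -, -⟩, -⟩
    obtain ⟨x, hx⟩ := Finset.card_pos.1 (by omega : 0 < t.card)
    have hx' : x ∈ c.pts := by exact_mod_cast htS hx
    rw [DiamondSquaredHorton.pts, Finset.mem_biUnion] at hx'
    obtain ⟨p, hp, hxp⟩ := hx'
    rw [Finset.card_eq_zero.1 (c.card_D p hp)] at hxp
    simp at hxp
  rw [stabbedCount, this, Set.ncard_empty]

/-- Every point of the plane stabs `O(m·k³)` empty triangles of a `◊`-squared Horton set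
with parameters `m` and `k`. -/
theorem diamond_squared_horton_stabbed_bound :
    ∃ C : ℝ, 0 < C ∧ ∀ (m k : ℕ) (c : DiamondSquaredHorton m k) (s : ℝ × ℝ),
      (stabbedCount ↑c.pts s : ℝ) ≤ C * (m : ℝ) * (k : ℝ) ^ 3 := by
  refine ⟨62409, by norm_num, fun m k c s => ?_⟩
  rcases Nat.eq_zero_or_pos k with rfl | hk
  · rw [zero_bound]; simp
  · exact main_bound c s hk
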